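/- arXiv:1205.2779 — 4 statements merged into one kernel-verified Lean document; each statement's English description precedes it below -/
import Mathlib

section
/- For every n ≥ 4, the derivation algebra of the naturally graded filiform Leibniz algebra NGF₂ has dimension n + 2, i.e. dim Der(NGF₂) = n + 2. -/
open scoped BigOperators

/-- The bilinear multiplication on `Fin n → ℂ` determined by structure constants
`c i j k` = coefficient of the basis vector `e k` in the product `[e i, e j]`
of basis vectors (all indices zero-based). -/
noncomputable def structMul (n : ℕ) (c : Fin n → Fin n → Fin n → ℂ) :
    (Fin n → ℂ) →ₗ[ℂ] (Fin n → ℂ) →ₗ[ℂ] (Fin n → ℂ) :=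
  LinearMap.mk₂ ℂ (fun x y k => ∑ i, ∑ j, x i * y j * c i j k)
    (by
      intro x x' y; funext k
      simp [add_mul, Finset.sum_add_distrib])
    (by
      intro a x y; funext k
      simp [Finset.mul_sum, mul_assoc])
    (by
      intro x y y'; funext k
      simp [mul_add, add_mul, Finset.sum_add_distrib])
    (by
      intro a x y; funext k
      simp only [Pi.smul_apply, smul_eq_mul, Finset.mul_sum]
      congr 1; funext i; congr 1; funext j; ring)

/-- The space of derivations of the algebra `(Fin n → ℂ, μ)`:
linear endomorphisms `d` with `d [x,y] = [d x, y] + [x, d y]`. -/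
noncomputable def derivations (n : ℕ)
    (μ : (Fin n → ℂ) →ₗ[ℂ] (Fin n → ℂ) →ₗ[ℂ] (Fin n → ℂ)) :
    Submodule ℂ (Module.End ℂ (Fin n → ℂ)) where
  carrier := {d | ∀ x y, d (μ x y) = μ (d x) y + μ x (d y)}
  add_mem' := by
    intro a b ha hb x y
    simp only [LinearMap.add_apply, ha x y, hb x y, map_add]
    abel
  zero_mem' := by intro x y; simp
  smul_mem' := by
    intro t a ha x y
    simp only [LinearMap.smul_apply, ha x y, map_smul, smul_add]

/-- Structure constants of `NGF₂`: `[e₁,e₁] = e₃`, `[eᵢ,e₁] = e_{i+1}` for `3 ≤ i ≤ n-1`. -/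
noncomputable def cNGF2 (n : ℕ) : Fin n → Fin n → Fin n → ℂ := fun i j k =>
  if j.val = 0 ∧ i.val = 0 ∧ k.val = 2 then 1
  else if j.val = 0 ∧ 2 ≤ i.val ∧ i.val ≤ n - 2 ∧ k.val = i.val + 1 then 1
  else 0

/-!
The multiplication of `NGF₂` is `[x, y] = y₁ • T x`, where `T` is right multiplication by `e₁` and
`y₁` is the first coordinate of `y`. A linear map `d` is a derivation exactly when
`d T = T d + (d e₁)₁ • T`; the remaining condition `(d y)₁ = (d e₁)₁ y₁` is automatic, because
vectors in the image or in the kernel of `T` have vanishing first coordinate. As `e₁` and `e₂`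
generate the space under `T`, and the only relations are `T e₂ = 0` and `T ^ (n - 1) e₁ = 0`, a
derivation is given by an arbitrary value at `e₁` and a value in `ker T = ⟨e₂, eₙ⟩` at `e₂`.
-/

open Module

theorem ext_on_option_fin_basis {R V W : Type*} [Semiring R] [AddCommMonoid V] [AddCommMonoid W]
    [Module R V] [Module R W] {m : ℕ} (b : Basis (Option (Fin (m + 1))) R V) {f g : V →ₗ[R] W}
    (h_none : f (b none) = g (b none))
    (h_castSucc : ∀ j : Fin m, f (b (some j.castSucc)) = g (b (some j.castSucc)))
    (h_last : f (b (some (Fin.last m))) = g (b (some (Fin.last m)))) : f = g :=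
  b.ext fun
    | none => h_none
    | some j => j.lastCases h_last h_castSucc

section BilinDerivations

variable {R V : Type*} [CommRing R] [AddCommGroup V] [Module R V]

/-- The derivations of the algebra `V` with bilinear multiplication `μ`, over any commutative ring;
`derivations n` is the case `V = Fin n → ℂ`. -/
def bilinDerivations (μ : V →ₗ[R] V →ₗ[R] V) : Submodule R (End R V) where
  carrier := {d | ∀ x y, d (μ x y) = μ (d x) y + μ x (d y)}
  add_mem' {d d'} hd hd' x y := by
    simp only [LinearMap.add_apply, hd x y, hd' x y, map_add]
    abel
  zero_mem' x y := by simp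
  smul_mem' t d hd x y := by
    simp only [LinearMap.smul_apply, hd x y, map_smul, smul_add]

theorem mem_bilinDerivations {μ : V →ₗ[R] V →ₗ[R] V} {d : End R V} :
    d ∈ bilinDerivations μ ↔ ∀ x y, d (μ x y) = μ (d x) y + μ x (d y) :=
  Iff.rfl

theorem derivations_eq_bilinDerivations (n : ℕ)
    (μ : (Fin n → ℂ) →ₗ[ℂ] (Fin n → ℂ) →ₗ[ℂ] (Fin n → ℂ)) :
    derivations n μ = bilinDerivations μ :=
  rfl

/-- The multiplication table of `NGF₂` in dimension `m + 3`. The index type separates `e₂ = b none`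
from the chain `e₁, e₃, e₄, …`, which is `b (some 0), b (some 1), b (some 2), …`. -/
structure IsNGF2Basis {m : ℕ} (μ : V →ₗ[R] V →ₗ[R] V) (b : Basis (Option (Fin (m + 2))) R V) :
    Prop where
  mul_castSucc (j : Fin (m + 1)) : μ (b (some j.castSucc)) (b (some 0)) = b (some j.succ)
  mul_last : μ (b (some (Fin.last (m + 1)))) (b (some 0)) = 0
  mul_none : μ (b none) (b (some 0)) = 0
  mul_of_ne (i j : Option (Fin (m + 2))) (hj : j ≠ some 0) : μ (b i) (b j) = 0

end BilinDerivations

namespace IsNGF2Basis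

variable {R V : Type*} [CommRing R] [AddCommGroup V] [Module R V] {m : ℕ}
  {μ : V →ₗ[R] V →ₗ[R] V} {b : Basis (Option (Fin (m + 2))) R V}

variable (μ b) in
/-- Right multiplication by `e₁`. -/
noncomputable def rightMul : End R V := μ.flip (b (some 0))

variable (b) in
/-- The first coordinate, that is, the coefficient of `e₁`. -/
noncomputable def firstCoord : V →ₗ[R] R := b.coord (some 0)

theorem firstCoord_some_zero : firstCoord b (b (some 0)) = 1 := by
  simp [firstCoord]

theorem rightMul_castSucc (h : IsNGF2Basis μ b) (j : Fin (m + 1)) :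
    rightMul μ b (b (some j.castSucc)) = b (some j.succ) :=
  h.mul_castSucc j

theorem rightMul_last (h : IsNGF2Basis μ b) : rightMul μ b (b (some (Fin.last (m + 1)))) = 0 :=
  h.mul_last

theorem rightMul_none (h : IsNGF2Basis μ b) : rightMul μ b (b none) = 0 :=
  h.mul_none

theorem mul_eq_firstCoord_smul_rightMul (h : IsNGF2Basis μ b) (x y : V) :
    μ x y = firstCoord b y • rightMul μ b x := by
  suffices μ = ((firstCoord b).smulRight (rightMul μ b)).flip from
    LinearMap.congr_fun₂ this x y
  refine b.ext fun i => b.ext fun j => ?_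
  obtain rfl | hj := eq_or_ne j (some 0)
  · simp [firstCoord, rightMul]
  · simp [firstCoord, h.mul_of_ne i j hj, hj]

theorem firstCoord_rightMul (h : IsNGF2Basis μ b) (x : V) :
    firstCoord b (rightMul μ b x) = 0 := by
  suffices firstCoord b ∘ₗ rightMul μ b = 0 from LinearMap.congr_fun this x
  apply ext_on_option_fin_basis b <;>
    simp [firstCoord, h.rightMul_none, h.rightMul_castSucc, h.rightMul_last]

theorem coord_succ_rightMul (h : IsNGF2Basis μ b) (j : Fin (m + 1)) (x : V) :
    b.coord (some j.succ) (rightMul μ b x) = b.coord (some j.castSucc) x := by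
  suffices b.coord (some j.succ) ∘ₗ rightMul μ b = b.coord (some j.castSucc) from
    LinearMap.congr_fun this x
  apply ext_on_option_fin_basis b <;>
    simp [h.rightMul_none, h.rightMul_castSucc, h.rightMul_last, Finsupp.single_apply]

theorem rightMul_pow_some_zero (h : IsNGF2Basis μ b) (j : Fin (m + 2)) :
    (rightMul μ b ^ (j : ℕ)) (b (some 0)) = b (some j) := by
  induction j using Fin.induction with
  | zero => simp
  | succ j ih =>
    rw [Fin.val_succ, pow_succ', End.mul_apply, ← Fin.val_castSucc, ih, h.rightMul_castSucc]

theorem rightMul_pow_eq_zero (h : IsNGF2Basis μ b) : rightMul μ b ^ (m + 2) = 0 := by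
  have h_zero : (rightMul μ b ^ (m + 2)) (b (some 0)) = 0 := by
    simpa [pow_succ', h.rightMul_last] using
      congrArg (rightMul μ b) (h.rightMul_pow_some_zero (Fin.last (m + 1)))
  refine b.ext fun
    | none => ?_
    | some j => ?_
  · rw [pow_succ, End.mul_apply, h.rightMul_none, map_zero, LinearMap.zero_apply]
  · rw [← h.rightMul_pow_some_zero, ← End.mul_apply, (Commute.pow_pow_self _ _ _).eq,
      End.mul_apply, h_zero, map_zero, LinearMap.zero_apply]

theorem coord_castSucc_of_mem_ker (h : IsNGF2Basis μ b) {x : V}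
    (hx : x ∈ (rightMul μ b).ker) (j : Fin (m + 1)) : b.coord (some j.castSucc) x = 0 := by
  rw [← h.coord_succ_rightMul, LinearMap.mem_ker.mp hx, map_zero]

theorem firstCoord_of_mem_ker (h : IsNGF2Basis μ b) {x : V}
    (hx : x ∈ (rightMul μ b).ker) : firstCoord b x = 0 :=
  h.coord_castSucc_of_mem_ker hx 0

/-- The kernel of right multiplication by `e₁` has basis `e₂, eₙ`. -/
noncomputable def kerRightMulEquiv (h : IsNGF2Basis μ b) : (rightMul μ b).ker ≃ₗ[R] R × R where
  toFun x := (b.coord none x, b.coord (some (Fin.last (m + 1))) x)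
  map_add' x y := by simp
  map_smul' c x := by simp
  invFun p := ⟨p.1 • b none + p.2 • b (some (Fin.last (m + 1))), by
    simp [h.rightMul_none, h.rightMul_last]⟩
  left_inv x := by
    ext
    refine b.ext_elem fun
      | none => by simp
      | some j => j.lastCases (by simp) fun j => ?_
    simpa using (h.coord_castSucc_of_mem_ker x.2 j).symm
  right_inv p := by simp

theorem apply_none_mem_ker_of_mul_rightMul (h : IsNGF2Basis μ b) {d : End R V} {r : R}
    (hd : d * rightMul μ b = rightMul μ b * d + r • rightMul μ b) :
    d (b none) ∈ (rightMul μ b).ker := by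
  simpa [h.rightMul_none] using (LinearMap.congr_fun hd (b none)).symm

theorem firstCoord_apply_of_mul_rightMul (h : IsNGF2Basis μ b) {d : End R V} {r : R}
    (hd : d * rightMul μ b = rightMul μ b * d + r • rightMul μ b) (y : V) :
    firstCoord b (d y) = firstCoord b (d (b (some 0))) * firstCoord b y := by
  have hdT (x : V) : d (rightMul μ b x) = rightMul μ b (d x) + r • rightMul μ b x :=
    LinearMap.congr_fun hd x
  suffices firstCoord b ∘ₗ d = firstCoord b (d (b (some 0))) • firstCoord b from
    LinearMap.congr_fun this y
  refine b.ext fun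
    | none => ?_
    | some j => j.cases ?_ fun j => ?_
  · simpa [firstCoord] using h.firstCoord_of_mem_ker (h.apply_none_mem_ker_of_mul_rightMul hd)
  · simp [firstCoord_some_zero]
  · simp [← h.rightMul_castSucc, hdT, h.firstCoord_rightMul]

theorem mem_bilinDerivations_iff (h : IsNGF2Basis μ b) {d : End R V} :
    d ∈ bilinDerivations μ ↔ d * rightMul μ b =
      rightMul μ b * d + firstCoord b (d (b (some 0))) • rightMul μ b := by
  simp only [mem_bilinDerivations, h.mul_eq_firstCoord_smul_rightMul]
  constructor
  · intro hd
    ext x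
    simpa [firstCoord_some_zero] using hd x (b (some 0))
  · intro hd x y
    rw [map_smul, ← End.mul_apply, hd, h.firstCoord_apply_of_mul_rightMul hd y]
    simp [smul_smul, mul_comm]

theorem derivation_rightMul (h : IsNGF2Basis μ b) {d : End R V} (hd : d ∈ bilinDerivations μ)
    (x : V) : d (rightMul μ b x) =
      rightMul μ b (d x) + firstCoord b (d (b (some 0))) • rightMul μ b x :=
  LinearMap.congr_fun (h.mem_bilinDerivations_iff.mp hd) x

theorem derivation_ext (h : IsNGF2Basis μ b) {d d' : End R V} (hd : d ∈ bilinDerivations μ)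
    (hd' : d' ∈ bilinDerivations μ) (h_zero : d (b (some 0)) = d' (b (some 0)))
    (h_none : d (b none) = d' (b none)) : d = d' := by
  refine b.ext fun
    | none => h_none
    | some j => ?_
  induction j using Fin.induction with
  | zero => exact h_zero
  | succ j ih =>
    rw [← h.rightMul_castSucc, h.derivation_rightMul hd, h.derivation_rightMul hd', ih, h_zero]

theorem derivation_none_mem_ker (h : IsNGF2Basis μ b) {d : End R V}
    (hd : d ∈ bilinDerivations μ) : d (b none) ∈ (rightMul μ b).ker :=
  h.apply_none_mem_ker_of_mul_rightMul (h.mem_bilinDerivations_iff.mp hd)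

variable (μ b) in
/-- The only linear map with values `a` at `e₁` and `v` at `e₂` that can be a derivation: its values
on the rest of the chain come from `d Tʲ = Tʲ d + j a₁ • Tʲ`. -/
noncomputable def extendByLeibniz (a v : V) : End R V :=
  b.constr R fun
    | none => v
    | some j => (rightMul μ b ^ (j : ℕ)) a + ((j : ℕ) * firstCoord b a) • b (some j)

theorem extendByLeibniz_none (a v : V) : extendByLeibniz μ b a v (b none) = v := by
  simp [extendByLeibniz]

theorem extendByLeibniz_some (a v : V) (j : Fin (m + 2)) :
    extendByLeibniz μ b a v (b (some j)) =
      (rightMul μ b ^ (j : ℕ)) a + ((j : ℕ) * firstCoord b a) • b (some j) := by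
  simp [extendByLeibniz]

theorem extendByLeibniz_some_zero (a v : V) : extendByLeibniz μ b a v (b (some 0)) = a := by
  simp [extendByLeibniz_some]

theorem extendByLeibniz_mem (h : IsNGF2Basis μ b) (a : V) {v : V}
    (hv : v ∈ (rightMul μ b).ker) : extendByLeibniz μ b a v ∈ bilinDerivations μ := by
  rw [h.mem_bilinDerivations_iff, extendByLeibniz_some_zero]
  apply ext_on_option_fin_basis b
  · simp [extendByLeibniz_none, h.rightMul_none, LinearMap.mem_ker.mp hv]
  · intro j
    simp only [End.mul_apply, LinearMap.add_apply, LinearMap.smul_apply, h.rightMul_castSucc,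
      extendByLeibniz_some, map_add, map_smul, Fin.val_succ, Fin.val_castSucc, pow_succ']
    push_cast
    module
  · have h_pow : rightMul μ b ((rightMul μ b ^ (m + 1)) a) = 0 := by
      rw [← End.mul_apply, ← pow_succ', h.rightMul_pow_eq_zero, LinearMap.zero_apply]
    simp [extendByLeibniz_some, h.rightMul_last, h_pow]

/-- A derivation is determined by its values at `e₁`, which is arbitrary, and at `e₂`, which is
an arbitrary element of the kernel of right multiplication by `e₁`. -/
noncomputable def bilinDerivationsEquiv (h : IsNGF2Basis μ b) :
    bilinDerivations μ ≃ₗ[R] V × (rightMul μ b).ker where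
  toFun d := (d.1 (b (some 0)), ⟨d.1 (b none), h.derivation_none_mem_ker d.2⟩)
  map_add' _ _ := rfl
  map_smul' _ _ := rfl
  invFun p := ⟨extendByLeibniz μ b p.1 p.2, h.extendByLeibniz_mem p.1 p.2.2⟩
  left_inv d := Subtype.ext <| h.derivation_ext (h.extendByLeibniz_mem _ <|
    h.derivation_none_mem_ker d.2) d.2 (extendByLeibniz_some_zero _ _) (extendByLeibniz_none _ _)
  right_inv _ := Prod.ext (extendByLeibniz_some_zero _ _) <|
    Subtype.ext (extendByLeibniz_none _ _)

end IsNGF2Basis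

theorem dim_der_NGF2_general {R V : Type*} [CommRing R] [Nontrivial R] [AddCommGroup V]
    [Module R V] {m : ℕ} {μ : V →ₗ[R] V →ₗ[R] V} {b : Basis (Option (Fin (m + 2))) R V}
    (h : IsNGF2Basis μ b) : finrank R (bilinDerivations μ) = finrank R V + 2 := by
  have := Module.Free.of_basis b
  have := Module.Finite.of_basis b
  rw [(h.bilinDerivationsEquiv.trans <|
    (LinearEquiv.refl R V).prodCongr h.kerRightMulEquiv).finrank_eq]
  simp

section StructureConstants

theorem structMul_single_single {n : ℕ} (c : Fin n → Fin n → Fin n → ℂ) (i j : Fin n) :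
    structMul n c (Pi.single i 1) (Pi.single j 1) = c i j := by
  ext k
  simp [structMul, Pi.single_apply]

/-- The standard basis `e₁, …, eₙ` of `ℂⁿ`, for `n = m + 3`, with `e₂` split off. -/
noncomputable def ngf2Basis (m : ℕ) : Basis (Option (Fin (m + 2))) ℂ (Fin (m + 3) → ℂ) :=
  (Pi.basisFun ℂ (Fin (m + 3))).reindex (finSuccEquiv' 1)

theorem ngf2Basis_none (m : ℕ) : ngf2Basis m none = Pi.single 1 1 := by
  simp [ngf2Basis]

theorem ngf2Basis_some_zero (m : ℕ) : ngf2Basis m (some 0) = Pi.single 0 1 := by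
  simp [ngf2Basis]

theorem ngf2Basis_some_succ (m : ℕ) (j : Fin (m + 1)) :
    ngf2Basis m (some j.succ) = Pi.single j.succ.succ 1 := by
  simp [ngf2Basis]

theorem cNGF2_zero_zero (m : ℕ) : cNGF2 (m + 3) 0 0 = Pi.single (0 : Fin (m + 1)).succ.succ 1 := by
  ext k
  simp [cNGF2, Pi.single_apply, Fin.ext_iff, -Fin.succ_zero_eq_one, -Fin.succ_zero_eq_one']

theorem cNGF2_castSucc_zero (m : ℕ) (i : Fin m) :
    cNGF2 (m + 3) i.castSucc.succ.succ 0 = Pi.single i.succ.succ.succ 1 := by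
  ext k
  simp [cNGF2, Pi.single_apply, Fin.ext_iff]

theorem cNGF2_last_zero (m : ℕ) : cNGF2 (m + 3) (Fin.last (m + 2)) 0 = 0 := by
  ext k
  simp [cNGF2]

theorem cNGF2_one_zero (m : ℕ) : cNGF2 (m + 3) 1 0 = 0 := by
  ext k
  simp [cNGF2]

theorem cNGF2_of_ne_zero {m : ℕ} (i : Fin (m + 3)) {j : Fin (m + 3)} (hj : j ≠ 0) :
    cNGF2 (m + 3) i j = 0 := by
  ext k
  simp [cNGF2, hj]

theorem isNGF2Basis_ngf2Basis (m : ℕ) :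
    IsNGF2Basis (structMul (m + 3) (cNGF2 (m + 3))) (ngf2Basis m) where
  mul_castSucc j := by
    rw [ngf2Basis_some_succ, ngf2Basis_some_zero]
    refine j.cases ?_ fun i => ?_
    · rw [Fin.castSucc_zero, ngf2Basis_some_zero, structMul_single_single, cNGF2_zero_zero]
    · rw [Fin.castSucc_succ, ngf2Basis_some_succ, structMul_single_single, cNGF2_castSucc_zero]
  mul_last := by
    rw [← Fin.succ_last, ngf2Basis_some_succ, ngf2Basis_some_zero, structMul_single_single,
      Fin.succ_last, Fin.succ_last, cNGF2_last_zero]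
  mul_none := by
    rw [ngf2Basis_none, ngf2Basis_some_zero, structMul_single_single, cNGF2_one_zero]
  mul_of_ne i j hj := by
    have hj' : (finSuccEquiv' 1).symm j ≠ 0 := fun h_zero =>
      hj ((finSuccEquiv' 1).symm.injective (h_zero.trans (by simp)))
    simp only [ngf2Basis, Basis.reindex_apply, Pi.basisFun_apply, structMul_single_single,
      cNGF2_of_ne_zero _ hj']

end StructureConstants

theorem dim_der_NGF2 (n : ℕ) (hn : 4 ≤ n) :
    Module.finrank ℂ (derivations n (structMul n (cNGF2 n))) = n + 2 := by
  obtain ⟨m, rfl⟩ : ∃ m, n = m + 3 := ⟨n - 3, by lia⟩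
  rw [derivations_eq_bilinDerivations]
  simpa using dim_der_NGF2_general (isNGF2Basis_ngf2Basis m)
end

section
/- Let n ≥ 5 and L = L(α₄,…,αₙ,θ) ∈ FLbₙ. If θ ≠ 0 and αᵢ = 0 for all 4 ≤ i ≤ n, then dim Der(L) = n. -/
open scoped BigOperators

/-- Structure constants of `L(α₄,…,αₙ,θ) ∈ FLbₙ`:
`[e₁,e₁] = e₃`; `[eᵢ,e₁] = e_{i+1}` for `2 ≤ i ≤ n-1`;
`[e₁,e₂] = α₄e₄ + ⋯ + α_{n-1}e_{n-1} + θeₙ`;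
`[eⱼ,e₂] = α₄e_{j+2} + ⋯ + α_{n+2-j}eₙ` for `2 ≤ j ≤ n-2`. -/
noncomputable def cFLb (n : ℕ) (α : ℕ → ℂ) (θ : ℂ) : Fin n → Fin n → Fin n → ℂ :=
  fun i j k =>
  if j.val = 0 then
    (if i.val = 0 ∧ k.val = 2 then 1
     else if 1 ≤ i.val ∧ i.val ≤ n - 2 ∧ k.val = i.val + 1 then 1
     else 0)
  else if j.val = 1 then
    (if i.val = 0 then
       (if 3 ≤ k.val ∧ k.val ≤ n - 2 then α (k.val + 1)
        else if k.val = n - 1 then θ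
        else 0)
     else if 1 ≤ i.val ∧ i.val ≤ n - 3 ∧ i.val + 2 ≤ k.val then α (k.val - i.val + 2)
     else 0)
  else 0

/-! Since the `αᵢ` vanish, the product is `[x, y] = y₁ N x + x₁ y₂ θ eₙ`, where `N` is right
multiplication by `e₁`. As `θ ≠ 0`, applying a derivation `d` to `[e₁, e₂] = θ eₙ` forces the
`e₁`-coordinate `a` of `d e₁` to vanish: along the chain `e_{i+1} = N eᵢ` the diagonal entry of `d`
grows by `a` at each step, which at `eₙ` gives `(n - 3) a = 0`. Once `a = 0`, `d` is determined by
the coordinates of `d e₂` along `e₂, …, eₙ` and the `eₙ`-coordinate of `d (e₁ - e₂)`. The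
derivations `N, N², …, N^{n-2}` together with two rank-one corrections, of `0` and of the identity,
realise each of these `n` coordinates separately. -/

namespace FLb

section Shift

variable (R : Type*) [CommSemiring R] (m : ℕ)

/-- Right multiplication by the first basis vector, on the algebra of dimension `m + 4`: zero-based,
it sends `e₀` to `e₂`, each other `eᵢ` to `eᵢ₊₁`, and the last basis vector to `0`. The dimension
is written `m + 4` so that `0`, `1`, `2` and `Fin.last` are four distinct indices. -/
def shift : Module.End R (Fin (m + 4) → R) where
  toFun x := Fin.cons 0 (Fin.cons 0 fun k : Fin (m + 2) =>
    x k.castSucc.succ + if k = 0 then x 0 else 0)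
  map_add' x y := by
    ext k
    refine Fin.cases (by simp) (Fin.cases (by simp) fun k => ?_) k
    simp only [Fin.cons_succ, Pi.add_apply]
    split_ifs <;> simp [add_add_add_comm]
  map_smul' a x := by
    ext k
    refine Fin.cases (by simp) (Fin.cases (by simp) fun k => ?_) k
    simp only [Fin.cons_succ, Pi.smul_apply, smul_eq_mul, RingHom.id_apply]
    split_ifs <;> simp [mul_add]

variable {R m}

@[simp]
lemma shift_apply_zero (x : Fin (m + 4) → R) : shift R m x 0 = 0 := rfl

@[simp]
lemma shift_apply_one (x : Fin (m + 4) → R) : shift R m x 1 = 0 := rfl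

@[simp]
lemma shift_apply_succ_succ (x : Fin (m + 4) → R) (k : Fin (m + 2)) :
    shift R m x k.succ.succ = x k.castSucc.succ + if k = 0 then x 0 else 0 := rfl

lemma two_ne_last : (2 : Fin (m + 4)) ≠ Fin.last (m + 3) :=
  Fin.ne_of_val_ne (by change 2 ≠ m + 3; omega)

lemma shift_apply_two (x : Fin (m + 4) → R) : shift R m x 2 = x 1 + x 0 :=
  shift_apply_succ_succ x 0

@[simp]
lemma shift_single_zero (a : R) : shift R m (Pi.single 0 a) = shift R m (Pi.single 1 a) := by
  ext k
  refine Fin.cases rfl (Fin.cases rfl fun k => ?_) k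
  simp [Pi.single_apply, Fin.ext_iff, -Fin.val_eq_zero_iff]

@[simp]
lemma shift_single_castSucc_succ (k : Fin (m + 2)) (a : R) :
    shift R m (Pi.single k.castSucc.succ a) = Pi.single k.succ.succ a := by
  ext l
  refine Fin.cases ?_ (Fin.cases ?_ fun l => ?_) l <;>
    simp [Pi.single_apply, Fin.ext_iff, -Fin.val_eq_zero_iff]

@[simp]
lemma shift_single_one (a : R) : shift R m (Pi.single 1 a) = Pi.single 2 a :=
  shift_single_castSucc_succ 0 a

@[simp]
lemma shift_single_last (a : R) : shift R m (Pi.single (Fin.last (m + 3)) a) = 0 := by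
  ext l
  refine Fin.cases rfl (Fin.cases rfl fun l => ?_) l
  have h_ne : l.castSucc.succ ≠ Fin.last (m + 3) :=
    (Fin.succ_injective _).ne (Fin.castSucc_lt_last l).ne
  rw [shift_apply_succ_succ, Pi.single_eq_of_ne h_ne]
  simp

lemma shift_pow_single_one (k : Fin (m + 3)) (a : R) :
    (shift R m ^ k.val) (Pi.single 1 a) = Pi.single k.succ a := by
  induction k using Fin.induction with
  | zero => simp
  | succ k ih =>
    rw [Fin.val_castSucc] at ih
    rw [Fin.val_succ, pow_succ', Module.End.mul_apply, ih,
      shift_single_castSucc_succ]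

lemma eq_zero_of_shift_eq_zero {x : Fin (m + 4) → R} (hx : shift R m x = 0) (h_zero : x 0 = 0)
    (h_last : x (Fin.last (m + 3)) = 0) : x = 0 := by
  ext i
  refine Fin.cases h_zero (Fin.lastCases h_last fun k => ?_) i
  simpa [h_zero] using congrFun hx k.succ.succ

lemma eq_zero_of_commute_shift {d : Module.End R (Fin (m + 4) → R)}
    (h_comm : Commute d (shift R m)) (h_zero : d (Pi.single 0 1) = 0)
    (h_one : d (Pi.single 1 1) = 0) : d = 0 := by
  refine (Pi.basisFun R _).ext fun i => ?_
  rw [Pi.basisFun_apply, LinearMap.zero_apply]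
  induction i using Fin.cases with
  | zero => exact h_zero
  | succ k =>
    rw [← shift_pow_single_one, ← Module.End.mul_apply, (h_comm.pow_right k.val).eq,
      Module.End.mul_apply, h_one, map_zero]

end Shift

section Product

variable {R : Type*} [CommSemiring R] {m : ℕ}

/-- The product of `L(0,…,0,θ)` in dimension `m + 4`, written through right multiplication by the
first basis vector. -/
def filiformMul (θ : R) :
    (Fin (m + 4) → R) →ₗ[R] (Fin (m + 4) → R) →ₗ[R] (Fin (m + 4) → R) :=
  LinearMap.mk₂ R
    (fun x y => y 0 • shift R m x + (x 0 * y 1) • Pi.single (Fin.last (m + 3)) θ)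
    (fun x x' y => by simp only [map_add, Pi.add_apply]; module)
    (fun a x y => by simp only [map_smul, Pi.smul_apply, smul_eq_mul]; module)
    (fun x y y' => by simp only [Pi.add_apply]; module)
    (fun a x y => by simp only [Pi.smul_apply, smul_eq_mul]; module)

lemma filiformMul_apply (θ : R) (x y : Fin (m + 4) → R) :
    filiformMul θ x y =
      y 0 • shift R m x + (x 0 * y 1) • Pi.single (Fin.last (m + 3)) θ := rfl

lemma filiformMul_single_zero (θ : R) (x : Fin (m + 4) → R) :
    filiformMul θ x (Pi.single 0 1) = shift R m x := by
  simp [filiformMul_apply]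

lemma filiformMul_single_one (θ : R) (x : Fin (m + 4) → R) :
    filiformMul θ x (Pi.single 1 1) = x 0 • Pi.single (Fin.last (m + 3)) θ := by
  simp [filiformMul_apply]

end Product

section Identification

variable {m : ℕ} {α : ℕ → ℂ} {θ : ℂ}

lemma structMul_single_single {n : ℕ} (c : Fin n → Fin n → Fin n → ℂ) (i j : Fin n) :
    structMul n c (Pi.single i 1) (Pi.single j 1) = c i j := by
  ext k
  simp [structMul, Pi.single_apply]

lemma cFLb_zero (i : Fin (m + 4)) :
    cFLb (m + 4) α θ i 0 = shift ℂ m (Pi.single i 1) := by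
  ext k
  refine Fin.cases ?_ (Fin.cases ?_ fun k => ?_) k
  · simp [cFLb]
  · simp only [cFLb, shift_apply_one, Fin.succ_zero_eq_one, Fin.val_zero, Fin.val_one]
    grind
  · simp only [cFLb, shift_apply_succ_succ, Pi.single_apply, Fin.ext_iff, Fin.val_succ,
      Fin.val_castSucc, Fin.val_zero]
    grind

lemma cFLb_one (hα : ∀ i, 4 ≤ i → i ≤ m + 4 → α i = 0) (i : Fin (m + 4)) :
    cFLb (m + 4) α θ i 1 =
      (Pi.single i 1 : Fin (m + 4) → ℂ) 0 • Pi.single (Fin.last (m + 3)) θ := by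
  ext k
  simp only [cFLb, Pi.smul_apply, smul_eq_mul, Pi.single_apply, Fin.ext_iff, Fin.val_last,
    Fin.val_zero, Fin.val_one]
  grind

lemma structMul_cFLb (hα : ∀ i, 4 ≤ i → i ≤ m + 4 → α i = 0) :
    structMul (m + 4) (cFLb (m + 4) α θ) = filiformMul θ := by
  refine (Pi.basisFun ℂ _).ext fun i => (Pi.basisFun ℂ _).ext fun j => ?_
  rw [Pi.basisFun_apply, Pi.basisFun_apply, structMul_single_single]
  refine Fin.cases ?_ (Fin.cases ?_ fun j => ?_) j
  · rw [filiformMul_single_zero, cFLb_zero]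
  · exact (cFLb_one hα i).trans (filiformMul_single_one θ _).symm
  · ext k
    simp [cFLb, filiformMul_apply, Pi.single_apply, Fin.ext_iff, -Fin.val_eq_zero_iff]

end Identification

section Construction

variable {m : ℕ} {θ : ℂ} {d : Module.End ℂ (Fin (m + 4) → ℂ)}

lemma mem_derivations_filiformMul (c : ℂ) (h_zero : ∀ x, d x 0 = 0)
    (h_one : ∀ x, d x 1 = c * (x 0 + x 1))
    (h_shift : ∀ x, d (shift ℂ m x) =
      shift ℂ m (d x) + (c * x 0) • Pi.single (Fin.last (m + 3)) θ)
    (h_last : d (Pi.single (Fin.last (m + 3)) θ) = c • Pi.single (Fin.last (m + 3)) θ) :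
    d ∈ derivations (m + 4) (filiformMul θ) := by
  intro x y
  simp only [filiformMul_apply, map_add, map_smul, h_zero, h_one, h_shift, h_last]
  module

lemma shift_pow_mem_derivations (k : ℕ) :
    shift ℂ m ^ (k + 1) ∈ derivations (m + 4) (filiformMul θ) := by
  refine mem_derivations_filiformMul 0 (fun x => ?_) (fun x => ?_) (fun x => ?_) ?_
  · simp [pow_succ']
  · simp [pow_succ']
  · rw [← Module.End.mul_apply, ← Module.End.mul_apply, ← pow_succ, ← pow_succ']
    simp
  · simp [pow_succ]

variable (m) in
/-- The derivation that sends `e₁` to `eₙ` and kills the other basis vectors (one-based, with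
`n = m + 4`). -/
def firstToLast : Module.End ℂ (Fin (m + 4) → ℂ) :=
  (LinearMap.proj 0).smulRight (Pi.single (Fin.last (m + 3)) 1)

lemma firstToLast_apply (x : Fin (m + 4) → ℂ) :
    firstToLast m x = x 0 • Pi.single (Fin.last (m + 3)) 1 := rfl

lemma firstToLast_mem_derivations :
    firstToLast m ∈ derivations (m + 4) (filiformMul θ) := by
  refine mem_derivations_filiformMul 0 (fun x => ?_) (fun x => ?_) (fun x => ?_) ?_ <;>
    simp [firstToLast_apply, Fin.ext_iff, -Fin.val_eq_zero_iff]

variable (m θ) in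
/-- The derivation that fixes `e₂, …, eₙ` and sends `e₁` to `e₂ - θ eₙ₋₁` (one-based, with
`n = m + 4`). -/
def almostIdentity : Module.End ℂ (Fin (m + 4) → ℂ) :=
  1 + (LinearMap.proj 0).smulRight
    (Pi.single 1 1 - Pi.single 0 1 - Pi.single (Fin.last (m + 1)).castSucc.succ θ)

lemma almostIdentity_apply (x : Fin (m + 4) → ℂ) :
    almostIdentity m θ x = x + x 0 •
      (Pi.single 1 1 - Pi.single 0 1 - Pi.single (Fin.last (m + 1)).castSucc.succ θ) := rfl

lemma almostIdentity_mem_derivations :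
    almostIdentity m θ ∈ derivations (m + 4) (filiformMul θ) := by
  have h_one_ne : (1 : Fin (m + 4)) ≠ (Fin.last (m + 1)).castSucc.succ := by simp [Fin.ext_iff]
  refine mem_derivations_filiformMul 1 (fun x => ?_) (fun x => ?_) (fun x => ?_) ?_
  · simp [almostIdentity_apply]
  · simp [almostIdentity_apply, h_one_ne, add_comm]
  · simp only [almostIdentity_apply, shift_apply_zero, map_add, map_sub, map_smul,
      shift_single_zero, shift_single_one, shift_single_castSucc_succ, Fin.succ_last]
    module
  · simp [almostIdentity_apply]

end Construction

section Coordinates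

variable (m : ℕ)

/-- The coordinates that parametrise the derivations: zero-based, the last coordinate of
`d (e₀ - e₁)` and all but the zeroth coordinate of `d e₁`. -/
def derivationCoords :
    Module.End ℂ (Fin (m + 4) → ℂ) →ₗ[ℂ] ℂ × (Fin (m + 3) → ℂ) :=
  (LinearMap.proj (Fin.last (m + 3)) ∘ₗ LinearMap.applyₗ (Pi.single 0 1 - Pi.single 1 1)).prod
    (LinearMap.funLeft ℂ ℂ Fin.succ ∘ₗ LinearMap.applyₗ (Pi.single 1 1))

variable {m}

lemma derivationCoords_apply (d : Module.End ℂ (Fin (m + 4) → ℂ)) :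
    derivationCoords m d = (d (Pi.single 0 1 - Pi.single 1 1) (Fin.last (m + 3)),
      fun k => d (Pi.single 1 1) k.succ) := rfl

lemma derivationCoords_firstToLast : derivationCoords m (firstToLast m) = (1, 0) := by
  ext <;> simp [derivationCoords_apply, firstToLast_apply]

lemma derivationCoords_almostIdentity (θ : ℂ) :
    derivationCoords m (almostIdentity m θ) = (0, Pi.single 0 1) := by
  ext k <;>
    simp [derivationCoords_apply, almostIdentity_apply, Pi.single_apply, Fin.ext_iff,
      -Fin.val_eq_zero_iff]

lemma derivationCoords_shift_pow (k : Fin (m + 2)) :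
    derivationCoords m (shift ℂ m ^ (k.val + 1)) = (0, Pi.single k.succ 1) := by
  ext l
  · simp [derivationCoords_apply, pow_succ]
  · have h_pow := shift_pow_single_one k.succ (1 : ℂ)
    rw [Fin.val_succ] at h_pow
    simp [derivationCoords_apply, h_pow, Pi.single_apply]

lemma exists_mem_derivations_derivationCoords_eq (θ : ℂ) (p : ℂ × (Fin (m + 3) → ℂ)) :
    ∃ d ∈ derivations (m + 4) (filiformMul θ), derivationCoords m d = p := by
  have h_basis (k : Fin (m + 3)) : ∃ d ∈ derivations (m + 4) (filiformMul θ),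
      derivationCoords m d = (0, Pi.single k 1) := by
    induction k using Fin.cases with
    | zero => exact ⟨_, almostIdentity_mem_derivations, derivationCoords_almostIdentity θ⟩
    | succ k => exact ⟨_, shift_pow_mem_derivations k, derivationCoords_shift_pow k⟩
  choose D hD hD_coords using h_basis
  refine ⟨p.1 • firstToLast m + ∑ k, p.2 k • D k,
    add_mem (Submodule.smul_mem _ _ firstToLast_mem_derivations)
      (sum_mem fun k _ => Submodule.smul_mem _ _ (hD k)), ?_⟩
  simp only [map_add, map_smul, map_sum, hD_coords, derivationCoords_firstToLast]
  ext <;> simp [Prod.fst_sum, Prod.snd_sum, Pi.single_apply]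

end Coordinates

section Rigidity

variable {m : ℕ} {θ : ℂ} {d : Module.End ℂ (Fin (m + 4) → ℂ)}

lemma derivation_shift (hd : d ∈ derivations (m + 4) (filiformMul θ)) (x : Fin (m + 4) → ℂ) :
    d (shift ℂ m x) = shift ℂ m (d x) + (d (Pi.single 0 1) 0 • shift ℂ m x
      + (x 0 * d (Pi.single 0 1) 1) • Pi.single (Fin.last (m + 3)) θ) := by
  have h := hd x (Pi.single 0 1)
  rwa [filiformMul_single_zero, filiformMul_single_zero, filiformMul_apply] at h

lemma smul_derivation_single_last (hd : d ∈ derivations (m + 4) (filiformMul θ))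
    (x : Fin (m + 4) → ℂ) :
    x 0 • d (Pi.single (Fin.last (m + 3)) θ) =
      d x 0 • Pi.single (Fin.last (m + 3)) θ + (d (Pi.single 1 1) 0 • shift ℂ m x
        + (x 0 * d (Pi.single 1 1) 1) • Pi.single (Fin.last (m + 3)) θ) := by
  have h := hd x (Pi.single 1 1)
  rwa [filiformMul_single_one, filiformMul_single_one, filiformMul_apply, map_smul] at h

lemma derivation_single_one_apply_zero (hd : d ∈ derivations (m + 4) (filiformMul θ)) :
    d (Pi.single 1 1) 0 = 0 := by
  simpa [two_ne_last] using (congrFun (smul_derivation_single_last hd (Pi.single 1 1)) 2).symm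

lemma shift_derivation_single_one (hd : d ∈ derivations (m + 4) (filiformMul θ)) :
    shift ℂ m (d (Pi.single 1 1)) = shift ℂ m (d (Pi.single 0 1))
      + d (Pi.single 0 1) 1 • Pi.single (Fin.last (m + 3)) θ := by
  have h_zero := derivation_shift hd (Pi.single 0 1)
  have h_one := derivation_shift hd (Pi.single 1 1)
  simp only [shift_single_zero, shift_single_one, Pi.single_eq_same, ne_eq, zero_ne_one,
    not_false_eq_true, Pi.single_eq_of_ne, zero_mul, zero_smul, one_mul, add_zero] at h_zero h_one
  linear_combination h_zero - h_one

lemma derivation_single_one_apply_one (hd : d ∈ derivations (m + 4) (filiformMul θ)) :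
    d (Pi.single 1 1) 1 = d (Pi.single 0 1) 0 + d (Pi.single 0 1) 1 := by
  have h_two := congrFun (shift_derivation_single_one hd) 2
  simpa [shift_apply_two, derivation_single_one_apply_zero hd, two_ne_last, add_comm] using h_two

lemma derivation_single_succ_apply_succ (hd : d ∈ derivations (m + 4) (filiformMul θ))
    (k : Fin (m + 3)) :
    d (Pi.single k.succ 1) k.succ = d (Pi.single 1 1) 1 + k.val * d (Pi.single 0 1) 0 := by
  induction k using Fin.induction with
  | zero => simp
  | succ k ih =>
    have h_corner : (if k = 0 then d (Pi.single k.castSucc.succ 1) 0 else 0) = 0 := by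
      split_ifs with hk
      · subst hk
        exact derivation_single_one_apply_zero hd
      · rfl
    rw [Fin.val_castSucc] at ih
    have h_next : d (Pi.single k.succ.succ 1) k.succ.succ =
        d (Pi.single k.castSucc.succ 1) k.castSucc.succ + d (Pi.single 0 1) 0 := by
      simpa [h_corner] using
        congrFun (derivation_shift hd (Pi.single k.castSucc.succ 1)) k.succ.succ
    rw [h_next, ih, Fin.val_succ]
    push_cast
    ring

lemma derivation_single_zero_apply_zero (hθ : θ ≠ 0)
    (hd : d ∈ derivations (m + 4) (filiformMul θ)) : d (Pi.single 0 1) 0 = 0 := by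
  have h_diag : d (Pi.single (Fin.last (m + 3)) 1) (Fin.last (m + 3)) =
      d (Pi.single 1 1) 1 + (m + 2) * d (Pi.single 0 1) 0 := by
    simpa using derivation_single_succ_apply_succ hd (Fin.last (m + 2))
  have h_scale : d (Pi.single (Fin.last (m + 3)) θ) = θ • d (Pi.single (Fin.last (m + 3)) 1) := by
    rw [← map_smul, ← Pi.single_smul, smul_eq_mul, mul_one]
  have h_last : θ * (d (Pi.single 1 1) 1 + (m + 2) * d (Pi.single 0 1) 0) =
      d (Pi.single 0 1) 0 * θ + d (Pi.single 1 1) 1 * θ := by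
    simpa [h_scale, h_diag, derivation_single_one_apply_zero hd] using
      congrFun (smul_derivation_single_last hd (Pi.single 0 1)) (Fin.last (m + 3))
  have h_prod : (θ * (m + 1)) * d (Pi.single 0 1) 0 = 0 := by linear_combination h_last
  exact (mul_eq_zero.mp h_prod).resolve_left (mul_ne_zero hθ (Nat.cast_add_one_ne_zero m))

lemma eq_zero_of_derivationCoords_eq_zero (hθ : θ ≠ 0)
    (hd : d ∈ derivations (m + 4) (filiformMul θ)) (h_coords : derivationCoords m d = 0) :
    d = 0 := by
  obtain ⟨h_last, h_succ⟩ := Prod.ext_iff.mp h_coords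
  have h_one : d (Pi.single 1 1) = 0 := by
    ext i
    exact Fin.cases (derivation_single_one_apply_zero hd) (congrFun h_succ) i
  have h_zero_zero := derivation_single_zero_apply_zero hθ hd
  have h_zero_one : d (Pi.single 0 1) 1 = 0 := by
    simpa [h_one, h_zero_zero] using (derivation_single_one_apply_one hd).symm
  have h_zero : d (Pi.single 0 1) = 0 := by
    refine eq_zero_of_shift_eq_zero ?_ h_zero_zero ?_
    · simpa [h_one, h_zero_one] using (shift_derivation_single_one hd).symm
    · simpa [derivationCoords_apply, h_one] using h_last
  have h_comm : Commute d (shift ℂ m) := LinearMap.ext fun x => by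
    simpa [h_zero] using derivation_shift hd x
  exact eq_zero_of_commute_shift h_comm h_zero h_one

end Rigidity

theorem finrank_derivations_filiformMul (m : ℕ) {θ : ℂ} (hθ : θ ≠ 0) :
    Module.finrank ℂ (derivations (m + 4) (filiformMul θ)) = m + 4 := by
  let coords := (derivationCoords m).domRestrict (derivations (m + 4) (filiformMul θ))
  have h_inj : Function.Injective coords :=
    LinearMap.ker_eq_bot.mp <| LinearMap.ker_eq_bot'.mpr fun d hd =>
      Subtype.ext (eq_zero_of_derivationCoords_eq_zero hθ d.2 hd)
  have h_surj : Function.Surjective coords := fun p =>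
    let ⟨d, hd, h_coords⟩ := exists_mem_derivations_derivationCoords_eq θ p
    ⟨⟨d, hd⟩, h_coords⟩
  rw [(LinearEquiv.ofBijective coords ⟨h_inj, h_surj⟩).finrank_eq, Module.finrank_prod,
    Module.finrank_self, Module.finrank_fin_fun]
  omega

end FLb

theorem dim_der_FLb_case2 (n : ℕ) (hn : 5 ≤ n) (α : ℕ → ℂ) (θ : ℂ)
    (hθ : θ ≠ 0) (hα : ∀ i, 4 ≤ i → i ≤ n → α i = 0) :
    Module.finrank ℂ (derivations n (structMul n (cFLb n α θ))) = n := by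
  obtain ⟨m, rfl⟩ : ∃ m, n = m + 4 := Nat.exists_eq_add_of_le' (by omega)
  rw [FLb.structMul_cFLb hα, FLb.finrank_derivations_filiformMul m hθ]
end

section
/- Let n ≥ 7 and L = L(α₄,…,αₙ,θ) ∈ FLbₙ. If θ ≠ 0, α₄ = 0, α₅ ≠ 0 and αᵢ = 0 for all 6 ≤ i ≤ n, then dim Der(L) = n − 1. -/
open scoped BigOperators

/-!
Let `R` and `S` be the right multiplications by `e₁` and `e₂`. Then `[x, y] = y₁ R x + y₂ S x`, and
`S` is `p(R)`, where `p = α₄X² + α₅X³ + ⋯ + αₙXⁿ⁻²`, up to a rank one term. A derivation `d`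
satisfies `[d, R] = a R + b S` and `[d, S] = c R + δ S`, where `a, b` are the first two coordinates
of `d e₁` and `c, δ` those of `d e₂`. On the chain `e₂, e₃, …, eₙ` the second relation becomes the
congruence `p' (a X + b p) ≡ c X + δ p + c (θ - αₙ) Xⁿ⁻²` modulo `Xⁿ⁻¹`, while `[e₁, e₁] = [e₂, e₁]`
gives `a + b = c + δ`. For `α₄ = 0` the coefficients of `X, X³, X⁴, X⁵` yield `c = 0`, `δ = 3a`,
`b = 2a`, `a α₆ = 0` and `a (α₇ + 3α₅²) = 0`. Hence `a = b = c = δ = 0` and `d` commutes with `R`,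
which leaves exactly the span of `R, R², …, Rⁿ⁻²` and the operator sending `e₂` to `eₙ` and every
other basis vector to `0`.
-/

namespace FLb

open Polynomial

section RightMultiplications

variable {K : Type*} [CommRing K] {n : ℕ}

/-- The basis vector of `Fin n → K` with zero-based index `k`. The index is a natural number, and
`basisVec n k = 0` for `n ≤ k`, so that shifting past the last basis vector gives `0`. -/
def basisVec (n k : ℕ) : Fin n → K := fun j => if j.val = k then 1 else 0

lemma basisVec_apply (k : ℕ) (j : Fin n) :
    basisVec n k j = if j.val = k then (1 : K) else 0 := rfl

lemma linearMap_apply_eq_sum_basisVec {M : Type*} [AddCommMonoid M] [Module K M]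
    (f : (Fin n → K) →ₗ[K] M) (x : Fin n → K) : f x = ∑ i, x i • f (basisVec n i) := by
  have hbasis (i : Fin n) : basisVec n i = fun j => if i = j then (1 : K) else 0 := by
    ext j
    simp only [basisVec, Fin.ext_iff, eq_comm]
  simp only [hbasis, ← LinearMap.pi_apply_eq_sum_univ f x]

variable (K) in
/-- Right multiplication by `e₁` in `FLb_{n+2}`. With zero-based indices it sends `e₀` and `e₁` to
`e₂`, shifts the other basis vectors by one, and kills the last one. -/
def rightMul₁ (n : ℕ) : Module.End K (Fin (n + 2) → K) where
  toFun x := Fin.cons 0 <| Fin.cons 0 fun j =>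
    x j.succ.castSucc + if j.val = 0 then x 0 else 0
  map_add' x y := by
    ext j
    refine Fin.cases ?_ (Fin.cases ?_ fun j => ?_) j
    · simp
    · simp
    · simp only [Pi.add_apply, Fin.cons_succ]
      split_ifs <;> ring
  map_smul' c x := by
    ext j
    refine Fin.cases ?_ (Fin.cases ?_ fun j => ?_) j <;> simp [mul_add]

@[simp]
lemma rightMul₁_apply_zero (x : Fin (n + 2) → K) : rightMul₁ K n x 0 = 0 := rfl

@[simp]
lemma rightMul₁_apply_one (x : Fin (n + 2) → K) : rightMul₁ K n x 1 = 0 := rfl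

lemma rightMul₁_apply_succ_succ (x : Fin (n + 2) → K) (j : Fin n) :
    rightMul₁ K n x j.succ.succ = x j.succ.castSucc + if j.val = 0 then x 0 else 0 := rfl

lemma rightMul₁_apply_two (hn : 1 ≤ n) (x : Fin (n + 2) → K) :
    rightMul₁ K n x ⟨2, by omega⟩ = x 0 + x 1 :=
  (rightMul₁_apply_succ_succ x ⟨0, hn⟩).trans (add_comm _ _)

lemma rightMul₁_basisVec_zero :
    rightMul₁ K n (basisVec _ 0) = basisVec _ 2 := by
  ext j
  refine Fin.cases ?_ (Fin.cases ?_ fun j => ?_) j <;>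
    simp [basisVec_apply, rightMul₁_apply_succ_succ]

lemma rightMul₁_basisVec_succ (k : ℕ) :
    rightMul₁ K n (basisVec _ (k + 1)) = basisVec _ (k + 2) := by
  ext j
  refine Fin.cases ?_ (Fin.cases ?_ fun j => ?_) j <;>
    simp [basisVec_apply, rightMul₁_apply_succ_succ]

lemma rightMul₁_pow_basisVec_succ (m k : ℕ) :
    (rightMul₁ K n ^ m) (basisVec _ (k + 1)) = basisVec _ (k + 1 + m) := by
  induction m with
  | zero => simp
  | succ m ih =>
    rw [pow_succ', Module.End.mul_apply, ih, Nat.add_right_comm k, rightMul₁_basisVec_succ]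
    congr 1
    omega

lemma aeval_rightMul₁_basisVec_succ_apply (q : K[X]) (i : ℕ) (j : Fin (n + 2)) :
    aeval (rightMul₁ K n) q (basisVec _ (i + 1)) j =
      if i + 1 ≤ j.val then q.coeff (j - (i + 1)) else 0 := by
  induction q using Polynomial.induction_on' with
  | add p q hp hq =>
    simp only [map_add, LinearMap.add_apply, Pi.add_apply, hp, hq, coeff_add]
    split_ifs <;> simp
  | monomial m c =>
    simp only [aeval_monomial, Module.End.mul_apply, Module.algebraMap_end_apply,
      rightMul₁_pow_basisVec_succ, Pi.smul_apply, basisVec_apply, coeff_monomial, smul_eq_mul,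
      mul_ite, mul_one, mul_zero]
    split_ifs <;> first | rfl | omega

lemma aeval_rightMul₁_basisVec_zero {q : K[X]} (hq : q.coeff 0 = 0) :
    aeval (rightMul₁ K n) q (basisVec _ 0) = aeval (rightMul₁ K n) q (basisVec _ 1) := by
  obtain ⟨r, rfl⟩ := X_dvd_iff.mpr hq
  rw [mul_comm, map_mul, aeval_X, Module.End.mul_apply, Module.End.mul_apply,
    rightMul₁_basisVec_zero, rightMul₁_basisVec_succ]

/-- The rank one operator `x ↦ xᵢ e_last`. For `i = 0` it accounts for the parameter `θ`, and for
`i = 1` it is a derivation. -/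
def coordToLast (i : Fin (n + 2)) : Module.End K (Fin (n + 2) → K) :=
  (LinearMap.proj i).smulRight (basisVec _ (n + 1))

lemma coordToLast_apply (i : Fin (n + 2)) (x : Fin (n + 2) → K) :
    coordToLast i x = x i • basisVec _ (n + 1) := rfl

lemma rightMul₁_mul_coordToLast (i : Fin (n + 2)) : rightMul₁ K n * coordToLast i = 0 := by
  ext x j
  have hlast : rightMul₁ K n (basisVec _ (n + 1)) = 0 := by
    rw [rightMul₁_basisVec_succ]
    ext j
    simp [basisVec_apply, j.isLt.ne]
  simp [coordToLast_apply, hlast]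

lemma commute_rightMul₁_coordToLast_zero : Commute (rightMul₁ K n) (coordToLast 0) := by
  rw [commute_iff_eq, rightMul₁_mul_coordToLast]
  ext x j
  simp [coordToLast_apply]

lemma commute_rightMul₁_coordToLast_one : Commute (rightMul₁ K n) (coordToLast 1) := by
  rw [commute_iff_eq, rightMul₁_mul_coordToLast]
  ext x j
  simp [coordToLast_apply]

lemma commute_coordToLast_zero_one (hn : 1 ≤ n) :
    Commute (coordToLast (0 : Fin (n + 2))) (coordToLast 1 : Module.End K (Fin (n + 2) → K)) := by
  ext x j
  simp [coordToLast_apply, basisVec_apply, show n ≠ 0 by omega]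

/-- The polynomial `p = α₄X² + α₅X³ + ⋯ + α_{n+2}Xⁿ`: away from `e₁`, right multiplication by `e₂`
in `FLb_{n+2}` is `p` evaluated at right multiplication by `e₁`. -/
noncomputable def mulPoly (n : ℕ) (α : ℕ → K) : K[X] :=
  ∑ k ∈ Finset.Icc 2 n, monomial k (α (k + 2))

lemma coeff_mulPoly (α : ℕ → K) (k : ℕ) :
    (mulPoly n α).coeff k = if 2 ≤ k ∧ k ≤ n then α (k + 2) else 0 := by
  simp [mulPoly, coeff_monomial]

/-- Right multiplication by `e₂` in `FLb_{n+2}`. The rank one term corrects the last coordinate of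
`[e₁, e₂]`, which is `θ` and not `α_{n+2}`. -/
noncomputable def rightMul₂ (n : ℕ) (α : ℕ → K) (θ : K) : Module.End K (Fin (n + 2) → K) :=
  aeval (rightMul₁ K n) (mulPoly n α) + (θ - α (n + 2)) • coordToLast 0

lemma rightMul₂_apply (α : ℕ → K) (θ : K) (x : Fin (n + 2) → K) :
    rightMul₂ n α θ x = aeval (rightMul₁ K n) (mulPoly n α) x +
      ((θ - α (n + 2)) * x 0) • basisVec _ (n + 1) := by
  simp [rightMul₂, coordToLast_apply, mul_smul]

lemma commute_rightMul₂ (α : ℕ → K) (θ : K) {f : Module.End K (Fin (n + 2) → K)}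
    (hR : Commute f (rightMul₁ K n)) (h0 : Commute f (coordToLast 0)) :
    Commute f (rightMul₂ n α θ) := by
  refine Commute.add_right ?_ (h0.smul_right _)
  rw [aeval_eq_sum_range]
  exact Commute.sum_right _ _ _ fun k _ => (hR.pow_right k).smul_right _

lemma ext_of_commute_rightMul₁ {f g : Module.End K (Fin (n + 2) → K)}
    (hf : Commute f (rightMul₁ K n)) (hg : Commute g (rightMul₁ K n))
    (h0 : f (basisVec _ 0) = g (basisVec _ 0)) (h1 : f (basisVec _ 1) = g (basisVec _ 1)) :
    f = g := by
  have hbasis (k : ℕ) : f (basisVec _ k) = g (basisVec _ k) := by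
    rcases k with _ | k
    · exact h0
    · rw [Nat.add_comm k, ← rightMul₁_pow_basisVec_succ k 0, ← Module.End.mul_apply,
        ← Module.End.mul_apply, (hf.pow_right k).eq, (hg.pow_right k).eq, Module.End.mul_apply,
        Module.End.mul_apply, h1]
  refine LinearMap.ext fun x => ?_
  rw [linearMap_apply_eq_sum_basisVec f, linearMap_apply_eq_sum_basisVec g]
  simp only [hbasis]

variable (K) in
/-- The operators `∑ cᵢ Rⁱ⁺¹ + s E`, where `R` is right multiplication by `e₁` and `E` sends `e₂` to
the last basis vector; they parametrize the derivations mapping the algebra into its square. -/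
noncomputable def derivationParam (n : ℕ) :
    (Fin n → K) × K →ₗ[K] Module.End K (Fin (n + 2) → K) :=
  (Fintype.linearCombination K fun i : Fin n => rightMul₁ K n ^ (i.val + 1)).coprod
    (LinearMap.toSpanSingleton K _ (coordToLast 1))

lemma derivationParam_apply (p : (Fin n → K) × K) :
    derivationParam K n p =
      ∑ i, p.1 i • rightMul₁ K n ^ (i.val + 1) + p.2 • coordToLast 1 := by
  simp [derivationParam, Fintype.linearCombination_apply]

lemma commute_derivationParam_of_commute {f : Module.End K (Fin (n + 2) → K)} (p : (Fin n → K) × K)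
    (hR : Commute f (rightMul₁ K n)) (h1 : Commute f (coordToLast 1)) :
    Commute f (derivationParam K n p) := by
  rw [derivationParam_apply]
  exact (Commute.sum_right _ _ _ fun i _ => (hR.pow_right _).smul_right _).add_right
    (h1.smul_right _)

lemma commute_derivationParam_rightMul₁ (p : (Fin n → K) × K) :
    Commute (derivationParam K n p) (rightMul₁ K n) :=
  (commute_derivationParam_of_commute p (Commute.refl _) commute_rightMul₁_coordToLast_one).symm

lemma commute_derivationParam_rightMul₂ (hn : 1 ≤ n) (α : ℕ → K) (θ : K) (p : (Fin n → K) × K) :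
    Commute (derivationParam K n p) (rightMul₂ n α θ) :=
  commute_rightMul₂ α θ (commute_derivationParam_rightMul₁ p)
    (commute_derivationParam_of_commute p commute_rightMul₁_coordToLast_zero.symm
      (commute_coordToLast_zero_one hn)).symm

lemma derivationParam_apply_apply_zero (p : (Fin n → K) × K) (x : Fin (n + 2) → K) :
    derivationParam K n p x 0 = 0 := by
  simp [derivationParam_apply, pow_succ', coordToLast_apply, basisVec_apply]

lemma derivationParam_apply_apply_one (hn : 1 ≤ n) (p : (Fin n → K) × K) (x : Fin (n + 2) → K) :
    derivationParam K n p x 1 = 0 := by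
  simp [derivationParam_apply, pow_succ', coordToLast_apply, basisVec_apply,
    show n ≠ 0 by omega]

lemma derivationParam_basisVec_zero_succ_succ (p : (Fin n → K) × K) (j : Fin n) :
    derivationParam K n p (basisVec _ 0) j.succ.succ = p.1 j := by
  have hpow (i : ℕ) : (rightMul₁ K n ^ (i + 1)) (basisVec _ 0) = basisVec _ (i + 2) := by
    rw [pow_succ, Module.End.mul_apply, rightMul₁_basisVec_zero, rightMul₁_pow_basisVec_succ,
      Nat.add_comm i]
  simp [derivationParam_apply, coordToLast_apply, hpow, basisVec_apply, Fin.val_inj]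

lemma derivationParam_basisVec_one (p : (Fin n → K) × K) :
    derivationParam K n p (basisVec _ 1) =
      derivationParam K n p (basisVec _ 0) + p.2 • basisVec _ (n + 1) := by
  simp [derivationParam_apply, coordToLast_apply, pow_succ, rightMul₁_basisVec_zero,
    rightMul₁_basisVec_succ, basisVec_apply]

lemma derivationParam_injective : Function.Injective (derivationParam K n) := by
  rw [injective_iff_map_eq_zero]
  intro p hp
  have h0 := derivationParam_basisVec_zero_succ_succ p
  have h1 := congrFun (derivationParam_basisVec_one p) (Fin.last (n + 1))
  simp only [hp, LinearMap.zero_apply, Pi.zero_apply] at h0 h1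
  refine Prod.ext (funext fun j => (h0 j).symm) ?_
  simpa [basisVec_apply] using h1.symm

lemma eq_add_smul_of_rightMul₁_eq {u v : Fin (n + 2) → K}
    (huv : rightMul₁ K n u = rightMul₁ K n v) (h0 : u 0 = v 0) :
    v = u + (v (Fin.last _) - u (Fin.last _)) • basisVec _ (n + 1) := by
  ext j
  refine Fin.lastCases ?_ (Fin.cases ?_ fun j => ?_) j
  · simp [basisVec_apply]
  · simp [basisVec_apply, h0]
  · have hj := congrFun huv j.succ.succ
    rw [rightMul₁_apply_succ_succ, rightMul₁_apply_succ_succ, h0] at hj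
    simpa [basisVec_apply, j.isLt.ne] using (add_right_cancel hj).symm

theorem mem_range_derivationParam (hn : 1 ≤ n) {d : Module.End K (Fin (n + 2) → K)}
    (hd : Commute d (rightMul₁ K n))
    (h00 : d (basisVec _ 0) 0 = 0) (h01 : d (basisVec _ 0) 1 = 0)
    (h10 : d (basisVec _ 1) 0 = 0) :
    d ∈ LinearMap.range (derivationParam K n) := by
  have hRd : rightMul₁ K n (d (basisVec _ 0)) = rightMul₁ K n (d (basisVec _ 1)) := by
    rw [← Module.End.mul_apply, ← Module.End.mul_apply, ← hd.eq, Module.End.mul_apply,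
      Module.End.mul_apply, rightMul₁_basisVec_zero, rightMul₁_basisVec_succ]
  have hd1 := eq_add_smul_of_rightMul₁_eq hRd (h00.trans h10.symm)
  set s := d (basisVec _ 1) (Fin.last _) - d (basisVec _ 0) (Fin.last _)
  set p : (Fin n → K) × K := (fun j => d (basisVec _ 0) j.succ.succ, s)
  have hp0 : derivationParam K n p (basisVec _ 0) = d (basisVec _ 0) := by
    ext j
    refine Fin.cases ?_ (Fin.cases ?_ fun j => ?_) j
    · rw [derivationParam_apply_apply_zero, h00]
    · exact (derivationParam_apply_apply_one hn p _).trans h01.symm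
    · exact derivationParam_basisVec_zero_succ_succ p j
  refine ⟨p, ext_of_commute_rightMul₁ (commute_derivationParam_rightMul₁ p) hd hp0 ?_⟩
  rw [derivationParam_basisVec_one, hp0, hd1]

lemma rightMul₂_aeval_rightMul₁_basisVec_one (α : ℕ → K) (θ : K) (q : K[X]) :
    rightMul₂ n α θ (aeval (rightMul₁ K n) q (basisVec _ 1)) =
      aeval (rightMul₁ K n) (mulPoly n α * q) (basisVec _ 1) := by
  have hzero := aeval_rightMul₁_basisVec_succ_apply q 0 (0 : Fin (n + 2))
  rw [if_neg (by simp)] at hzero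
  rw [rightMul₂_apply, hzero, mul_zero, zero_smul, add_zero, map_mul, Module.End.mul_apply]

lemma rightMul₂_basisVec_one (α : ℕ → K) (θ : K) :
    rightMul₂ n α θ (basisVec _ 1) = aeval (rightMul₁ K n) (mulPoly n α) (basisVec _ 1) := by
  simpa using rightMul₂_aeval_rightMul₁_basisVec_one (n := n) α θ 1

lemma rightMul₂_basisVec_zero (α : ℕ → K) (θ : K) :
    rightMul₂ n α θ (basisVec _ 0) =
      rightMul₂ n α θ (basisVec _ 1) + (θ - α (n + 2)) • basisVec _ (n + 1) := by
  rw [rightMul₂_basisVec_one, rightMul₂_apply,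
    aeval_rightMul₁_basisVec_zero (by simp [coeff_mulPoly])]
  simp [basisVec_apply]

/-- On the chain `e₂, e₃, …, e_{n+2}` both right multiplications are polynomials in `R`, hence
commute; this turns the Leibniz rule for `[d, q(R)]` into `q'(R) [d, R]`. -/
lemma map_aeval_rightMul₁_basisVec_one {α : ℕ → K} {θ a b : K}
    {d : Module.End K (Fin (n + 2) → K)}
    (hd : ∀ x, d (rightMul₁ K n x) =
      rightMul₁ K n (d x) + (a • rightMul₁ K n x + b • rightMul₂ n α θ x)) (q : K[X]) :
    d (aeval (rightMul₁ K n) q (basisVec _ 1)) =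
      aeval (rightMul₁ K n) q (d (basisVec _ 1)) +
        aeval (rightMul₁ K n) (derivative q * (C a * X + C b * mulPoly n α)) (basisVec _ 1) := by
  induction q using Polynomial.induction_on with
  | C c => simp
  | add p q hp hq =>
    simp only [map_add, LinearMap.add_apply, hp, hq, add_mul]
    abel
  | monomial m c ih =>
    set q : K[X] := C c * X ^ m
    have hXq (x : Fin (n + 2) → K) :
        aeval (rightMul₁ K n) (X * q) x = rightMul₁ K n (aeval (rightMul₁ K n) q x) := by
      rw [map_mul, aeval_X, Module.End.mul_apply]
    have hderiv : derivative (X * q) * (C a * X + C b * mulPoly n α) =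
        X * (derivative q * (C a * X + C b * mulPoly n α)) +
          (C a * (X * q) + C b * (mulPoly n α * q)) := by
      rw [derivative_mul, derivative_X]
      ring
    rw [show C c * X ^ (m + 1) = X * q by ring, hderiv, hXq, hd, ih,
      rightMul₂_aeval_rightMul₁_basisVec_one]
    simp only [map_add, map_mul, aeval_X, aeval_C, LinearMap.add_apply, Module.End.mul_apply,
      Module.algebraMap_end_apply]
    abel

end RightMultiplications

lemma coeff_derivative_mul_of_coeff_eq_zero {K : Type*} [CommRing K] {q : K[X]}
    (h0 : q.coeff 0 = 0) (h1 : q.coeff 1 = 0) (h2 : q.coeff 2 = 0) (a b : K) :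
    (derivative q * (C a * X + C b * q)).coeff 3 = 3 * a * q.coeff 3 ∧
      (derivative q * (C a * X + C b * q)).coeff 4 = 4 * a * q.coeff 4 ∧
      (derivative q * (C a * X + C b * q)).coeff 5 =
        5 * a * q.coeff 5 + 3 * b * q.coeff 3 ^ 2 := by
  simp only [coeff_mul, Finset.Nat.antidiagonal_succ, Finset.Nat.antidiagonal_zero]
  refine ⟨?_, ?_, ?_⟩ <;> simp [coeff_derivative, coeff_X, h0, h1, h2] <;> ring

section Derivations

variable {n : ℕ} {α : ℕ → ℂ} {θ : ℂ}

lemma cFLb_zero_eq_rightMul₁ (i k : Fin (n + 2)) :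
    cFLb (n + 2) α θ i 0 k = rightMul₁ ℂ n (basisVec _ i) k := by
  have hk := k.isLt
  rcases i with ⟨_ | i, hi⟩
  · simp [cFLb, rightMul₁_basisVec_zero, basisVec_apply]
  · simp only [cFLb, rightMul₁_basisVec_succ, basisVec_apply, Fin.val_zero]
    grind

lemma cFLb_one_eq_rightMul₂ (hn : 2 ≤ n) (i k : Fin (n + 2)) :
    cFLb (n + 2) α θ i 1 k = rightMul₂ n α θ (basisVec _ i) k := by
  have hk := k.isLt
  rcases i with ⟨_ | i, hi⟩
  · simp only [rightMul₂_basisVec_zero, rightMul₂_basisVec_one, Pi.add_apply, Pi.smul_apply,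
      smul_eq_mul, aeval_rightMul₁_basisVec_succ_apply _ 0, coeff_mulPoly, cFLb, basisVec_apply,
      Fin.val_one]
    grind
  · simp only [rightMul₂_apply, Pi.add_apply, Pi.smul_apply, smul_eq_mul,
      aeval_rightMul₁_basisVec_succ_apply, coeff_mulPoly, cFLb, basisVec_apply, Fin.val_one,
      Fin.val_zero]
    grind

theorem structMul_cFLb_s9 (hn : 2 ≤ n) (x y : Fin (n + 2) → ℂ) :
    structMul (n + 2) (cFLb (n + 2) α θ) x y =
      y 0 • rightMul₁ ℂ n x + y 1 • rightMul₂ n α θ x := by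
  ext k
  have hright (i : Fin (n + 2)) : ∑ j, x i * y j * cFLb (n + 2) α θ i j k =
      y 0 * (x i * rightMul₁ ℂ n (basisVec _ i) k) +
        y 1 * (x i * rightMul₂ n α θ (basisVec _ i) k) := by
    have hzero (j : Fin n) : cFLb (n + 2) α θ i j.succ.succ k = 0 := by simp [cFLb]
    simp only [Fin.sum_univ_succ, Fin.succ_zero_eq_one, cFLb_zero_eq_rightMul₁,
      cFLb_one_eq_rightMul₂ hn, hzero, mul_zero, Finset.sum_const_zero]
    ring
  simp only [structMul, LinearMap.mk₂_apply, hright, Finset.sum_add_distrib, ← Finset.mul_sum]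
  rw [linearMap_apply_eq_sum_basisVec (rightMul₁ ℂ n) x,
    linearMap_apply_eq_sum_basisVec (rightMul₂ n α θ) x]
  simp [Finset.sum_apply]

lemma mem_derivations_of_commute (hn : 2 ≤ n) {d : Module.End ℂ (Fin (n + 2) → ℂ)}
    (h₁ : Commute d (rightMul₁ ℂ n)) (h₂ : Commute d (rightMul₂ n α θ))
    (h0 : ∀ x, d x 0 = 0) (h1 : ∀ x, d x 1 = 0) :
    d ∈ derivations (n + 2) (structMul (n + 2) (cFLb (n + 2) α θ)) := by
  intro x y
  have h₁x : d (rightMul₁ ℂ n x) = rightMul₁ ℂ n (d x) := LinearMap.congr_fun h₁.eq x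
  have h₂x : d (rightMul₂ n α θ x) = rightMul₂ n α θ (d x) := LinearMap.congr_fun h₂.eq x
  simp [structMul_cFLb_s9 hn, h₁x, h₂x, h0, h1]

theorem range_derivationParam_le_derivations (hn : 2 ≤ n) :
    LinearMap.range (derivationParam ℂ n) ≤
      derivations (n + 2) (structMul (n + 2) (cFLb (n + 2) α θ)) := by
  rintro _ ⟨p, rfl⟩
  have hn1 : 1 ≤ n := by omega
  exact mem_derivations_of_commute hn (commute_derivationParam_rightMul₁ p)
    (commute_derivationParam_rightMul₂ hn1 α θ p) (derivationParam_apply_apply_zero p)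
    (derivationParam_apply_apply_one hn1 p)

variable {d : Module.End ℂ (Fin (n + 2) → ℂ)}

lemma derivation_apply_rightMul₁ (hn : 2 ≤ n)
    (hd : d ∈ derivations (n + 2) (structMul (n + 2) (cFLb (n + 2) α θ)))
    (x : Fin (n + 2) → ℂ) :
    d (rightMul₁ ℂ n x) = rightMul₁ ℂ n (d x) +
      (d (basisVec _ 0) 0 • rightMul₁ ℂ n x + d (basisVec _ 0) 1 • rightMul₂ n α θ x) := by
  simpa [structMul_cFLb_s9 hn, basisVec_apply] using hd x (basisVec _ 0)

lemma derivation_apply_rightMul₂ (hn : 2 ≤ n)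
    (hd : d ∈ derivations (n + 2) (structMul (n + 2) (cFLb (n + 2) α θ)))
    (x : Fin (n + 2) → ℂ) :
    d (rightMul₂ n α θ x) = rightMul₂ n α θ (d x) +
      (d (basisVec _ 1) 0 • rightMul₁ ℂ n x + d (basisVec _ 1) 1 • rightMul₂ n α θ x) := by
  simpa [structMul_cFLb_s9 hn, basisVec_apply] using hd x (basisVec _ 1)

lemma derivation_apply_zero_add_apply_one (hn : 2 ≤ n)
    (hd : d ∈ derivations (n + 2) (structMul (n + 2) (cFLb (n + 2) α θ))) :
    d (basisVec _ 0) 0 + d (basisVec _ 0) 1 =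
      d (basisVec _ 1) 0 + d (basisVec _ 1) 1 := by
  have hchain : rightMul₁ ℂ n (d (basisVec _ 0)) +
      (d (basisVec _ 0) 1 * (θ - α (n + 2))) • basisVec _ (n + 1) =
        rightMul₁ ℂ n (d (basisVec _ 1)) := by
    have h0 := derivation_apply_rightMul₁ hn hd (basisVec _ 0)
    have h1 := derivation_apply_rightMul₁ hn hd (basisVec _ 1)
    rw [rightMul₁_basisVec_zero, rightMul₂_basisVec_zero] at h0
    rw [rightMul₁_basisVec_succ] at h1
    linear_combination (norm := module) h1 - h0
  simpa [rightMul₁_apply_two (show 1 ≤ n by omega), basisVec_apply, show n ≠ 1 by omega]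
    using congrFun hchain ⟨2, by omega⟩

lemma derivation_aeval_relation (hn : 2 ≤ n)
    (hd : d ∈ derivations (n + 2) (structMul (n + 2) (cFLb (n + 2) α θ))) :
    aeval (rightMul₁ ℂ n) (derivative (mulPoly n α) *
        (C (d (basisVec _ 0) 0) * X + C (d (basisVec _ 0) 1) * mulPoly n α)) (basisVec _ 1) =
      aeval (rightMul₁ ℂ n)
        (C (d (basisVec _ 1) 0) * X + C (d (basisVec _ 1) 1) * mulPoly n α) (basisVec _ 1) +
      ((θ - α (n + 2)) * d (basisVec _ 1) 0) • basisVec _ (n + 1) := by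
  have h₁ := map_aeval_rightMul₁_basisVec_one (derivation_apply_rightMul₁ hn hd) (mulPoly n α)
  have h₂ := derivation_apply_rightMul₂ hn hd (basisVec _ 1)
  rw [rightMul₂_basisVec_one, rightMul₂_apply, h₁, add_assoc] at h₂
  rw [add_left_cancel h₂]
  simp only [map_add, map_mul, aeval_X, aeval_C, LinearMap.add_apply, Module.End.mul_apply,
    Module.algebraMap_end_apply]
  abel

lemma derivation_basisVec_one_apply_zero (hn : 2 ≤ n)
    (hd : d ∈ derivations (n + 2) (structMul (n + 2) (cFLb (n + 2) α θ))) :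
    d (basisVec _ 1) 0 = 0 := by
  have h := congrFun (derivation_aeval_relation hn hd) ⟨2, by omega⟩
  simpa [aeval_rightMul₁_basisVec_succ_apply _ 0, coeff_mulPoly, basisVec_apply, coeff_mul,
    coeff_derivative, Finset.Nat.antidiagonal_succ, show n ≠ 1 by omega, -map_add, -map_mul]
    using h.symm

lemma derivation_coeff_relation (hn : 2 ≤ n)
    (hd : d ∈ derivations (n + 2) (structMul (n + 2) (cFLb (n + 2) α θ)))
    {k : ℕ} (hk : k ≤ n) :
    (derivative (mulPoly n α) *
        (C (d (basisVec _ 0) 0) * X + C (d (basisVec _ 0) 1) * mulPoly n α)).coeff k =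
      d (basisVec _ 1) 1 * (mulPoly n α).coeff k := by
  have h := congrFun (derivation_aeval_relation hn hd) ⟨k + 1, by omega⟩
  simpa [derivation_basisVec_one_apply_zero hn hd, aeval_rightMul₁_basisVec_succ_apply _ 0,
    ← C_mul', -map_add, -map_mul] using h

theorem derivation_basisVec_zero_apply_eq_zero (hn : 5 ≤ n) (h4 : α 4 = 0) (h5 : α 5 ≠ 0)
    (h67 : α 6 ≠ 0 ∨ α 7 ≠ -3 * α 5 ^ 2)
    (hd : d ∈ derivations (n + 2) (structMul (n + 2) (cFLb (n + 2) α θ))) :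
    d (basisVec _ 0) 0 = 0 ∧ d (basisVec _ 0) 1 = 0 := by
  have hn2 : 2 ≤ n := by omega
  have hadd := derivation_apply_zero_add_apply_one hn2 hd
  rw [derivation_basisVec_one_apply_zero hn2 hd, zero_add] at hadd
  obtain ⟨hp3, hp4, hp5⟩ := coeff_derivative_mul_of_coeff_eq_zero (q := mulPoly n α)
    (by simp [coeff_mulPoly]) (by simp [coeff_mulPoly]) (by simp [coeff_mulPoly, h4])
    (d (basisVec _ 0) 0) (d (basisVec _ 0) 1)
  rw [derivation_coeff_relation hn2 hd (by omega), coeff_mulPoly, if_pos (by omega)] at hp3 hp4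
  rw [derivation_coeff_relation hn2 hd (by omega), coeff_mulPoly, coeff_mulPoly,
    if_pos (by omega), if_pos (by omega)] at hp5
  set a := d (basisVec _ 0) 0
  set b := d (basisVec _ 0) 1
  rw [← hadd] at hp3 hp4 hp5
  have hb : b = 2 * a := mul_right_cancel₀ h5 (by linear_combination hp3)
  have ha : a = 0 := by
    rcases h67 with h6 | h7
    · refine (mul_eq_zero.mp ?_).resolve_right h6
      linear_combination hb * α 6 - hp4
    · refine (mul_eq_zero.mp ?_).resolve_right (sub_ne_zero.mpr h7)
      linear_combination (hb * (α 7 - 3 * α 5 ^ 2) - hp5) / 2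
  exact ⟨ha, by rw [hb, ha, mul_zero]⟩

theorem derivations_eq_range_derivationParam (hn : 5 ≤ n) (h4 : α 4 = 0) (h5 : α 5 ≠ 0)
    (h67 : α 6 ≠ 0 ∨ α 7 ≠ -3 * α 5 ^ 2) :
    derivations (n + 2) (structMul (n + 2) (cFLb (n + 2) α θ)) =
      LinearMap.range (derivationParam ℂ n) := by
  refine le_antisymm (fun d hd => ?_) (range_derivationParam_le_derivations (by omega))
  have hn2 : 2 ≤ n := by omega
  obtain ⟨h00, h01⟩ := derivation_basisVec_zero_apply_eq_zero hn h4 h5 h67 hd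
  have hcomm : Commute d (rightMul₁ ℂ n) := LinearMap.ext fun x => by
    simpa [h00, h01] using derivation_apply_rightMul₁ hn2 hd x
  exact mem_range_derivationParam (by omega) hcomm h00 h01
    (derivation_basisVec_one_apply_zero hn2 hd)

end Derivations

end FLb

theorem dim_der_FLb_case5_general (n : ℕ) (hn : 7 ≤ n) (α : ℕ → ℂ) (θ : ℂ)
    (h4 : α 4 = 0) (h5 : α 5 ≠ 0) (h67 : α 6 ≠ 0 ∨ α 7 ≠ -3 * α 5 ^ 2) :
    Module.finrank ℂ (derivations n (structMul n (cFLb n α θ))) = n - 1 := by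
  obtain ⟨m, rfl⟩ : ∃ m, n = m + 2 := ⟨n - 2, by omega⟩
  rw [FLb.derivations_eq_range_derivationParam (by omega) h4 h5 h67,
    LinearMap.finrank_range_of_inj FLb.derivationParam_injective]
  simp

theorem dim_der_FLb_case5 (n : ℕ) (hn : 7 ≤ n) (α : ℕ → ℂ) (θ : ℂ)
    (hθ : θ ≠ 0) (h4 : α 4 = 0) (h5 : α 5 ≠ 0) (hα : ∀ i, 6 ≤ i → i ≤ n → α i = 0) :
    Module.finrank ℂ (derivations n (structMul n (cFLb n α θ))) = n - 1 :=
  dim_der_FLb_case5_general n hn α θ h4 h5 (.inr (by simp [hα 7 (by norm_num) hn, h5]))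
end

section
/- For every n ≥ 5 and every choice of parameters β₃, …, β_{n−1}, γ ∈ ℂ, the algebra L = L(β₃,…,β_{n−1},γ) of the second class SLbₙ satisfies n − 1 ≤ dim Der(L) ≤ n + 2. -/
open scoped BigOperators

/-- Structure constants of `L(β₃,…,β_{n-1},γ) ∈ SLbₙ`:
`[e₁,e₁] = e₃`; `[eᵢ,e₁] = e_{i+1}` for `3 ≤ i ≤ n-1`;
`[e₁,e₂] = β₃e₄ + ⋯ + β_{n-1}eₙ`; `[e₂,e₂] = γeₙ`;
`[eⱼ,e₂] = β₃e_{j+2} + ⋯ + β_{n+1-j}eₙ` for `3 ≤ j ≤ n-2`. -/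
noncomputable def cSLb (n : ℕ) (β : ℕ → ℂ) (γ : ℂ) : Fin n → Fin n → Fin n → ℂ :=
  fun i j k =>
  if j.val = 0 then
    (if i.val = 0 ∧ k.val = 2 then 1
     else if 2 ≤ i.val ∧ i.val ≤ n - 2 ∧ k.val = i.val + 1 then 1
     else 0)
  else if j.val = 1 then
    (if i.val = 0 ∧ 3 ≤ k.val then β k.val
     else if i.val = 1 ∧ k.val = n - 1 then γ
     else if 2 ≤ i.val ∧ i.val ≤ n - 3 ∧ i.val + 2 ≤ k.val then β (k.val - i.val + 1)
     else 0)
  else 0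

/-! Let `A` be right multiplication by `e₁`. It shifts `e₁ ↦ e₃ ↦ e₄ ↦ ⋯ ↦ eₙ ↦ 0` and kills `e₂`.
If `F` denotes the operator `e₂ ↦ eₙ` killing the other basis vectors, then `A F = F A = 0`, and
right multiplication by `e₂` is `β₃ A² + ⋯ + β_{n-1} A^{n-2} + γ F`, while `e₃, …, eₙ` are right
annihilators. So `A, A², …, A^{n-2}, F` commute with all right multiplications and take values
in the right annihilator, which makes them `n - 1` independent derivations.

Conversely, a derivation `d` with `d e₁ = 0` commutes with `A`. Hence it kills every `Aᵏ e₁`, and it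
is determined by `d e₂`, which lies in `ker A`. Since `A` has corank at most `2`, evaluation at `e₁`
gives `dim Der ≤ n + 2`. -/

section Corank

variable {K V : Type*} [DivisionRing K] [AddCommGroup V] [Module K V] [FiniteDimensional K V]

theorem finrank_ker_le_card_of_range_sup_span_eq_top {f : Module.End K V} (s : Finset V)
    (h : LinearMap.range f ⊔ Submodule.span K (s : Set V) = ⊤) :
    Module.finrank K (LinearMap.ker f) ≤ s.card := by
  have hsup := Submodule.finrank_add_le_finrank_add_finrank (LinearMap.range f)
    (Submodule.span K (s : Set V))
  rw [h, finrank_top] at hsup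
  have hspan : Module.finrank K (Submodule.span K (s : Set V)) ≤ s.card :=
    finrank_span_finset_le_card s
  have hrank := f.finrank_range_add_finrank_ker
  omega

theorem finrank_ker_le_two_of_span_orbit_eq_top {f : Module.End K V} {u v : V}
    (h : Submodule.span K (insert v (Set.range fun k : ℕ => (f ^ k) u)) = ⊤) :
    Module.finrank K (LinearMap.ker f) ≤ 2 := by
  classical
  refine (finrank_ker_le_card_of_range_sup_span_eq_top {u, v} ?_).trans Finset.card_le_two
  rw [eq_top_iff, ← h, Submodule.span_le]
  have hmem : ∀ x ∈ ({u, v} : Finset V),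
      x ∈ LinearMap.range f ⊔ Submodule.span K (({u, v} : Finset V) : Set V) :=
    fun x hx => Submodule.mem_sup_right (Submodule.subset_span hx)
  rintro _ (rfl | ⟨k, rfl⟩)
  · exact hmem _ (by simp)
  · cases k with
    | zero => exact hmem _ (by simp)
    | succ k =>
      exact Submodule.mem_sup_left ⟨(f ^ k) u, by simp only [pow_succ', Module.End.mul_apply]⟩

theorem finrank_le_add_of_ker {E W : Type*} [AddCommGroup E] [Module K E] [AddCommGroup W]
    [Module K W] (D : Submodule K E) [FiniteDimensional K D] (f : E →ₗ[K] V) (g : E →ₗ[K] W)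
    (U : Submodule K W) [FiniteDimensional K U] (hmem : ∀ d ∈ D, f d = 0 → g d ∈ U)
    (hzero : ∀ d ∈ D, f d = 0 → g d = 0 → d = 0) :
    Module.finrank K D ≤ Module.finrank K V + Module.finrank K U := by
  let fD : D →ₗ[K] V := f ∘ₗ D.subtype
  let gKer : LinearMap.ker fD →ₗ[K] U :=
    (g ∘ₗ D.subtype ∘ₗ (LinearMap.ker fD).subtype).codRestrict U fun d => hmem d d.1.2 d.2
  have hinj : Function.Injective gKer := (injective_iff_map_eq_zero gKer).2 fun d hd =>
    Subtype.ext (Subtype.ext (hzero d d.1.2 d.2 (congrArg Subtype.val hd)))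
  rw [← fD.finrank_range_add_finrank_ker]
  exact add_le_add (LinearMap.range fD).finrank_le (LinearMap.finrank_le_finrank_of_injective hinj)

end Corank

section Derivations

variable {n : ℕ} {μ : (Fin n → ℂ) →ₗ[ℂ] (Fin n → ℂ) →ₗ[ℂ] (Fin n → ℂ)}
  {d : Module.End ℂ (Fin n → ℂ)}

theorem mem_derivations_of_commute (hcomm : ∀ y, Commute d (μ.flip y))
    (hann : μ.flip ∘ₗ d = 0) : d ∈ derivations n μ := by
  intro x y
  have hxy : d (μ x y) = μ (d x) y := LinearMap.congr_fun (hcomm y) x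
  have hzero : μ x (d y) = 0 := LinearMap.congr_fun (LinearMap.congr_fun hann y) x
  rw [hxy, hzero, add_zero]

theorem commute_flip_of_mem_derivations (hd : d ∈ derivations n μ) {u : Fin n → ℂ}
    (hu : d u = 0) : Commute d (μ.flip u) := by
  refine LinearMap.ext fun x => ?_
  simpa [hu] using hd x u

theorem eq_zero_of_mem_derivations {u v : Fin n → ℂ}
    (hspan : Submodule.span ℂ (insert v (Set.range fun k : ℕ => ((μ.flip u) ^ k) u)) = ⊤)
    (hd : d ∈ derivations n μ) (hu : d u = 0) (hv : d v = 0) : d = 0 := by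
  refine LinearMap.ext_on hspan ?_
  rintro _ (rfl | ⟨k, rfl⟩)
  · exact hv
  · have hcomm := LinearMap.congr_fun ((commute_flip_of_mem_derivations hd hu).pow_right k) u
    simpa [hu] using hcomm

theorem finrank_derivations_le_add_two {u v : Fin n → ℂ} (hvu : μ v u = 0)
    (hspan : Submodule.span ℂ (insert v (Set.range fun k : ℕ => ((μ.flip u) ^ k) u)) = ⊤) :
    Module.finrank ℂ (derivations n μ) ≤ n + 2 := by
  have hmem : ∀ d ∈ derivations n μ, d u = 0 → d v ∈ LinearMap.ker (μ.flip u) := fun d hd hu => by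
    have hcomm := LinearMap.congr_fun (commute_flip_of_mem_derivations hd hu) v
    simpa only [LinearMap.mem_ker, Module.End.mul_apply, LinearMap.flip_apply, hvu, map_zero]
      using hcomm.symm
  calc Module.finrank ℂ (derivations n μ)
      ≤ Module.finrank ℂ (Fin n → ℂ) + Module.finrank ℂ (LinearMap.ker (μ.flip u)) :=
        finrank_le_add_of_ker _ (LinearMap.applyₗ u) (LinearMap.applyₗ v) _ hmem
          fun _ hd hu hv => eq_zero_of_mem_derivations hspan hd hu hv
    _ ≤ n + 2 := by
        rw [Module.finrank_fin_fun]
        exact Nat.add_le_add_left (finrank_ker_le_two_of_span_orbit_eq_top hspan) n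

end Derivations

section BasisVec

/-- The basis vector `e_{i+1}` of the paper. It is `0` for `i ≥ n`, so that identities such as
`shift_basisVec_of_two_le` need no upper bound on the index. -/
noncomputable def basisVec (n i : ℕ) : Fin n → ℂ := fun k => if k.val = i then 1 else 0

variable {n : ℕ}

theorem basisVec_val (i : Fin n) : basisVec n i = Pi.single i 1 := by
  ext k
  simp [basisVec, Pi.single_apply, Fin.ext_iff]

theorem basisVec_eq_zero {i : ℕ} (hi : n ≤ i) : basisVec n i = 0 := by
  ext k
  have hk : k.val ≠ i := by omega
  simp [basisVec, hk]

theorem linearMap_ext_basisVec {M : Type*} [AddCommMonoid M] [Module ℂ M]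
    {f g : (Fin n → ℂ) →ₗ[ℂ] M} (h : ∀ i < n, f (basisVec n i) = g (basisVec n i)) : f = g :=
  (Pi.basisFun ℂ (Fin n)).ext fun i => by
    simpa [basisVec_val] using h i i.isLt

theorem linearCombination_basisVec {M : Type*} [AddCommMonoid M] [Module ℂ M] (w : Fin n → M)
    {i : ℕ} (hi : i < n) : Fintype.linearCombination ℂ w (basisVec n i) = w ⟨i, hi⟩ := by
  rw [basisVec_val ⟨i, hi⟩, Fintype.linearCombination_apply_single, one_smul]

theorem structMul_basisVec (c : Fin n → Fin n → Fin n → ℂ) (i j : Fin n) :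
    structMul n c (basisVec n i) (basisVec n j) = c i j := by
  ext k
  simp [structMul, basisVec_val, Pi.single_apply]

theorem linearIndependent_basisVec_add_two :
    LinearIndependent ℂ fun k : Fin (n - 2) => basisVec n (k + 2) := by
  have hinj : Function.Injective fun k : Fin (n - 2) => (⟨k + 2, by omega⟩ : Fin n) := by
    intro k l hkl
    simpa [Fin.ext_iff] using hkl
  convert (Pi.basisFun ℂ (Fin n)).linearIndependent.comp _ hinj using 2 with k
  simp [← basisVec_val]

theorem span_basisVec : Submodule.span ℂ (basisVec n '' Set.Iio n) = ⊤ := by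
  rw [← (Pi.basisFun ℂ (Fin n)).span_eq]
  congr 1
  ext x
  simp [Set.mem_range, Fin.exists_iff, ← basisVec_val]

theorem sum_smul_basisVec_add_apply (β : ℕ → ℂ) {i : ℕ} (hi : 1 ≤ i) (m : Fin n) :
    (∑ k ∈ Finset.Ico 2 (n - 1), β (k + 1) • basisVec n (i + k)) m =
      if i + 2 ≤ m.val then β (m - i + 1) else 0 := by
  simp only [Finset.sum_apply, Pi.smul_apply, basisVec, smul_eq_mul, mul_ite, mul_one, mul_zero]
  split_ifs with hm
  · rw [Finset.sum_eq_single_of_mem (m.val - i) (Finset.mem_Ico.2 (by omega))]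
    · rw [if_pos (by omega)]
    · intro k _ hk
      exact if_neg (by omega)
  · refine Finset.sum_eq_zero fun k hk => if_neg ?_
    rw [Finset.mem_Ico] at hk
    omega

end BasisVec

section Operators

/-- The nilpotent operator `e₁ ↦ e₃ ↦ e₄ ↦ ⋯ ↦ eₙ ↦ 0`, `e₂ ↦ 0`, which is right multiplication
by `e₁` in every algebra of the class `SLbₙ`. -/
noncomputable def shift (n : ℕ) : Module.End ℂ (Fin n → ℂ) :=
  Fintype.linearCombination ℂ fun i : Fin n =>
    if i.val = 0 then basisVec n 2 else if i.val = 1 then 0 else basisVec n (i + 1)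

/-- The operator `e₂ ↦ eₙ` killing all other basis vectors: the derivation of the algebras in
`SLbₙ` that is not a polynomial in `shift n`. -/
noncomputable def secondToLast (n : ℕ) : Module.End ℂ (Fin n → ℂ) :=
  Fintype.linearCombination ℂ fun i : Fin n => if i.val = 1 then basisVec n (n - 1) else 0

variable {n : ℕ}

theorem shift_basisVec_zero : shift n (basisVec n 0) = basisVec n 2 := by
  rcases Nat.eq_zero_or_pos n with rfl | hn
  · exact Subsingleton.elim _ _
  · exact linearCombination_basisVec _ hn

theorem shift_basisVec_one : shift n (basisVec n 1) = 0 := by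
  rcases lt_or_ge 1 n with hn | hn
  · exact linearCombination_basisVec _ hn
  · rw [basisVec_eq_zero hn, map_zero]

theorem shift_basisVec_of_two_le {i : ℕ} (hi : 2 ≤ i) :
    shift n (basisVec n i) = basisVec n (i + 1) := by
  rcases lt_or_ge i n with hin | hin
  · rw [shift, linearCombination_basisVec _ hin, if_neg (show i ≠ 0 by omega),
      if_neg (show i ≠ 1 by omega)]
  · rw [basisVec_eq_zero hin, map_zero, basisVec_eq_zero (by omega)]

theorem shift_pow_basisVec_of_two_le {i : ℕ} (hi : 2 ≤ i) (k : ℕ) :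
    (shift n ^ k) (basisVec n i) = basisVec n (i + k) := by
  induction k with
  | zero => rfl
  | succ k ih =>
    rw [pow_succ', Module.End.mul_apply, ih, shift_basisVec_of_two_le (by omega), add_assoc]

theorem shift_pow_basisVec_zero {k : ℕ} (hk : 1 ≤ k) :
    (shift n ^ k) (basisVec n 0) = basisVec n (1 + k) := by
  obtain ⟨k, rfl⟩ := Nat.exists_eq_add_of_le' hk
  rw [pow_succ, Module.End.mul_apply, shift_basisVec_zero, shift_pow_basisVec_of_two_le le_rfl]
  congr 1
  omega

theorem shift_pow_basisVec_one {k : ℕ} (hk : 1 ≤ k) : (shift n ^ k) (basisVec n 1) = 0 := by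
  obtain ⟨k, rfl⟩ := Nat.exists_eq_add_of_le' hk
  rw [pow_succ, Module.End.mul_apply, shift_basisVec_one, map_zero]

theorem secondToLast_basisVec_one (hn : 1 < n) :
    secondToLast n (basisVec n 1) = basisVec n (n - 1) :=
  linearCombination_basisVec _ hn

theorem secondToLast_basisVec_of_ne {i : ℕ} (hi : i ≠ 1) : secondToLast n (basisVec n i) = 0 := by
  rcases lt_or_ge i n with hin | hin
  · rw [secondToLast, linearCombination_basisVec _ hin, if_neg hi]
  · rw [basisVec_eq_zero hin, map_zero]

theorem span_orbit_shift_eq_top :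
    Submodule.span ℂ
      (insert (basisVec n 1) (Set.range fun k : ℕ => (shift n ^ k) (basisVec n 0))) = ⊤ := by
  rw [eq_top_iff, ← span_basisVec]
  refine Submodule.span_mono ?_
  rintro _ ⟨i, -, rfl⟩
  rcases i with _ | _ | i
  · exact Or.inr ⟨0, rfl⟩
  · exact Or.inl rfl
  · exact Or.inr ⟨i + 1, (shift_pow_basisVec_zero (by omega)).trans (by congr 1; omega)⟩

theorem shift_mul_secondToLast (hn : 3 ≤ n) : shift n * secondToLast n = 0 := by
  refine linearMap_ext_basisVec fun i _ => ?_
  rw [Module.End.mul_apply, LinearMap.zero_apply]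
  rcases eq_or_ne i 1 with rfl | hi
  · rw [secondToLast_basisVec_one (by omega), shift_basisVec_of_two_le (by omega),
      basisVec_eq_zero (by omega)]
  · rw [secondToLast_basisVec_of_ne hi, map_zero]

theorem secondToLast_mul_shift : secondToLast n * shift n = 0 := by
  refine linearMap_ext_basisVec fun i _ => ?_
  rw [Module.End.mul_apply, LinearMap.zero_apply]
  rcases i with _ | _ | i
  · rw [shift_basisVec_zero, secondToLast_basisVec_of_ne (by omega)]
  · rw [shift_basisVec_one, map_zero]
  · rw [shift_basisVec_of_two_le (by omega), secondToLast_basisVec_of_ne (by omega)]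

theorem commute_shift_secondToLast (hn : 3 ≤ n) : Commute (shift n) (secondToLast n) :=
  (shift_mul_secondToLast hn).trans secondToLast_mul_shift.symm

theorem linearIndependent_shift_pow_secondToLast (hn : 3 ≤ n) :
    LinearIndependent ℂ
      (Sum.elim (fun k : Fin (n - 2) => shift n ^ (k.val + 1)) fun _ : Unit => secondToLast n) := by
  let ev : Module.End ℂ (Fin n → ℂ) →ₗ[ℂ] (Fin n → ℂ) × (Fin n → ℂ) :=
    (LinearMap.applyₗ (basisVec n 0)).prod (LinearMap.applyₗ (basisVec n 1))
  have hlast : basisVec n (n - 1) ≠ 0 := fun h => by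
    simpa [basisVec] using congrFun h ⟨n - 1, by omega⟩
  refine LinearIndependent.of_comp ev ?_
  convert linearIndependent_inl_union_inr' (linearIndependent_basisVec_add_two (n := n))
    (LinearIndependent.of_subsingleton (v := fun _ : Unit => basisVec n (n - 1)) () hlast) using 1
  ext1 (k | _)
  · simp [ev, shift_pow_basisVec_zero, shift_pow_basisVec_one, add_left_comm]
  · simp [ev, secondToLast_basisVec_of_ne, secondToLast_basisVec_one (show 1 < n by omega)]

end Operators

section SLb

variable {n : ℕ} (β : ℕ → ℂ) (γ : ℂ)

/-- The multiplication of the algebra `L(β₃,…,β_{n-1},γ)`. -/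
noncomputable abbrev mulSLb (n : ℕ) (β : ℕ → ℂ) (γ : ℂ) :
    (Fin n → ℂ) →ₗ[ℂ] (Fin n → ℂ) →ₗ[ℂ] (Fin n → ℂ) :=
  structMul n (cSLb n β γ)

theorem mulSLb_flip_basisVec_zero : (mulSLb n β γ).flip (basisVec n 0) = shift n := by
  refine linearMap_ext_basisVec fun i hi => ?_
  rw [LinearMap.flip_apply, structMul_basisVec _ ⟨i, hi⟩ ⟨0, by omega⟩]
  rcases i with _ | _ | i
  · rw [shift_basisVec_zero]
    ext m
    simp [cSLb, basisVec]
  · rw [shift_basisVec_one]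
    ext m
    simp [cSLb]
  · rw [shift_basisVec_of_two_le (by omega)]
    ext m
    simp only [cSLb, basisVec]
    grind

theorem mulSLb_flip_basisVec_one (hn : 3 ≤ n) :
    (mulSLb n β γ).flip (basisVec n 1) =
      ∑ k ∈ Finset.Ico 2 (n - 1), β (k + 1) • shift n ^ k + γ • secondToLast n := by
  refine linearMap_ext_basisVec fun i hi => ?_
  rw [LinearMap.flip_apply, structMul_basisVec _ ⟨i, hi⟩ ⟨1, by omega⟩]
  simp only [LinearMap.add_apply, LinearMap.sum_apply, LinearMap.smul_apply]
  have one_le {k : ℕ} (hk : k ∈ Finset.Ico 2 (n - 1)) : 1 ≤ k := by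
    rw [Finset.mem_Ico] at hk
    omega
  obtain rfl | rfl | hi₂ : i = 0 ∨ i = 1 ∨ 2 ≤ i := by omega
  · rw [Finset.sum_congr rfl fun k hk => by rw [shift_pow_basisVec_zero (one_le hk)],
      secondToLast_basisVec_of_ne zero_ne_one, smul_zero, add_zero]
    ext m
    rw [sum_smul_basisVec_add_apply β le_rfl]
    simp only [cSLb]
    grind
  · rw [Finset.sum_eq_zero fun k hk => by rw [shift_pow_basisVec_one (one_le hk), smul_zero],
      secondToLast_basisVec_one (by omega), zero_add]
    ext m
    simp [cSLb, basisVec]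
  · simp only [shift_pow_basisVec_of_two_le hi₂]
    rw [secondToLast_basisVec_of_ne (by omega), smul_zero, add_zero]
    ext m
    rw [sum_smul_basisVec_add_apply β (by omega)]
    simp only [cSLb]
    grind

theorem mulSLb_flip_basisVec_of_two_le {j : ℕ} (hj : 2 ≤ j) :
    (mulSLb n β γ).flip (basisVec n j) = 0 := by
  rcases lt_or_ge j n with hjn | hjn
  · refine linearMap_ext_basisVec fun i hi => ?_
    rw [LinearMap.flip_apply, structMul_basisVec _ ⟨i, hi⟩ ⟨j, hjn⟩]
    ext m
    simp [cSLb, show j ≠ 0 by omega, show j ≠ 1 by omega]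
  · rw [basisVec_eq_zero hjn, map_zero]

theorem mulSLb_flip_comp_shift : (mulSLb n β γ).flip ∘ₗ shift n = 0 := by
  refine linearMap_ext_basisVec fun i _ => ?_
  rw [LinearMap.comp_apply, LinearMap.zero_apply]
  rcases i with _ | _ | i
  · rw [shift_basisVec_zero, mulSLb_flip_basisVec_of_two_le β γ le_rfl]
  · rw [shift_basisVec_one, map_zero]
  · rw [shift_basisVec_of_two_le (by omega), mulSLb_flip_basisVec_of_two_le β γ (by omega)]

theorem mulSLb_flip_comp_secondToLast (hn : 3 ≤ n) :
    (mulSLb n β γ).flip ∘ₗ secondToLast n = 0 := by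
  refine linearMap_ext_basisVec fun i _ => ?_
  rw [LinearMap.comp_apply, LinearMap.zero_apply]
  rcases eq_or_ne i 1 with rfl | hi
  · rw [secondToLast_basisVec_one (by omega), mulSLb_flip_basisVec_of_two_le β γ (by omega)]
  · rw [secondToLast_basisVec_of_ne hi, map_zero]

variable {β γ}

theorem commute_mulSLb_flip (hn : 3 ≤ n) {d : Module.End ℂ (Fin n → ℂ)}
    (hshift : Commute d (shift n)) (hlast : Commute d (secondToLast n)) (y : Fin n → ℂ) :
    Commute d ((mulSLb n β γ).flip y) := by
  have hy : y ∈ Submodule.span ℂ (basisVec n '' Set.Iio n) := span_basisVec ▸ Submodule.mem_top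
  induction hy using Submodule.span_induction with
  | mem _ hmem =>
    obtain ⟨j, -, rfl⟩ := hmem
    rcases j with _ | _ | j
    · rwa [mulSLb_flip_basisVec_zero]
    · rw [mulSLb_flip_basisVec_one β γ hn]
      exact (Commute.sum_right _ _ _ fun k _ => (hshift.pow_right _).smul_right _).add_right
        (hlast.smul_right γ)
    · rw [mulSLb_flip_basisVec_of_two_le β γ (by omega)]
      exact Commute.zero_right d
  | zero => rw [map_zero]; exact Commute.zero_right d
  | add _ _ _ _ hx hz => rw [map_add]; exact hx.add_right hz
  | smul a _ _ hx => rw [map_smul]; exact hx.smul_right a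

theorem shift_pow_succ_mem_derivations (hn : 3 ≤ n) (k : ℕ) :
    shift n ^ (k + 1) ∈ derivations n (mulSLb n β γ) := by
  refine mem_derivations_of_commute (commute_mulSLb_flip hn ((Commute.refl _).pow_left _)
    ((commute_shift_secondToLast hn).pow_left _)) ?_
  rw [pow_succ', Module.End.mul_eq_comp, ← LinearMap.comp_assoc, mulSLb_flip_comp_shift,
    LinearMap.zero_comp]

theorem secondToLast_mem_derivations (hn : 3 ≤ n) :
    secondToLast n ∈ derivations n (mulSLb n β γ) :=
  mem_derivations_of_commute
    (commute_mulSLb_flip hn (commute_shift_secondToLast hn).symm (Commute.refl _))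
    (mulSLb_flip_comp_secondToLast β γ hn)

theorem le_finrank_derivations_mulSLb (hn : 3 ≤ n) :
    n - 1 ≤ Module.finrank ℂ (derivations n (mulSLb n β γ)) := by
  have hindep := linearIndependent_shift_pow_secondToLast hn
  have hcard : Fintype.card (Fin (n - 2) ⊕ Unit) = n - 1 := by
    rw [Fintype.card_sum, Fintype.card_fin, Fintype.card_unit]
    omega
  rw [← hcard, ← finrank_span_eq_card hindep]
  refine Submodule.finrank_mono (Submodule.span_le.2 ?_)
  rintro _ ⟨k | _, rfl⟩
  · exact shift_pow_succ_mem_derivations hn k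
  · exact secondToLast_mem_derivations hn

theorem finrank_derivations_mulSLb_le :
    Module.finrank ℂ (derivations n (mulSLb n β γ)) ≤ n + 2 := by
  have hmul_flip := mulSLb_flip_basisVec_zero (n := n) β γ
  refine finrank_derivations_le_add_two (u := basisVec n 0) (v := basisVec n 1) ?_ ?_
  · rw [← LinearMap.flip_apply, hmul_flip, shift_basisVec_one]
  · rw [hmul_flip, span_orbit_shift_eq_top]

end SLb

theorem dim_der_SLb_bounds_general (n : ℕ) (hn : 3 ≤ n) (β : ℕ → ℂ) (γ : ℂ) :
    n - 1 ≤ Module.finrank ℂ (derivations n (structMul n (cSLb n β γ))) ∧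
      Module.finrank ℂ (derivations n (structMul n (cSLb n β γ))) ≤ n + 2 :=
  ⟨le_finrank_derivations_mulSLb hn, finrank_derivations_mulSLb_le⟩

theorem dim_der_SLb_bounds (n : ℕ) (hn : 5 ≤ n) (β : ℕ → ℂ) (γ : ℂ) :
    n - 1 ≤ Module.finrank ℂ (derivations n (structMul n (cSLb n β γ))) ∧
      Module.finrank ℂ (derivations n (structMul n (cSLb n β γ))) ≤ n + 2 :=
  dim_der_SLb_bounds_general n (by omega) β γ
end
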